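/- Let N ≥ 2 and fix y ∈ ℝ^N. Then for all b ∈ S_a and x ∈ ℝ^N the integrals in the recursive definition of J_N(b;x,y) converge absolutely, and there exists a unique function F, holomorphic on the open set D_N = {(b,x) ∈ S_a × ℂ^N : max_{1≤j<k≤N} |Im(x_j−x_k)| < 2a − Re b}, such that F(b,x) = J_N(b;x,y) for all b ∈ S_a and all x ∈ ℝ^N. -/

import Mathlib

open MeasureTheory Complex

/-- `α = 2π/(a₊a₋)`. -/
noncomputable def alphaPar (ap am : ℝ) : ℝ := 2 * Real.pi / (ap * am)

/-- The function `g(a₊,a₋;z)` from the integral representation of the hyperbolic gamma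
function. -/
noncomputable def ghyp (ap am : ℝ) (z : ℂ) : ℂ :=
  ∫ y in Set.Ioi (0 : ℝ),
    (1 / (y : ℂ)) *
      (Complex.sin (2 * (y : ℂ) * z) /
          (2 * Complex.sinh ((ap : ℂ) * (y : ℂ)) * Complex.sinh ((am : ℂ) * (y : ℂ))) -
        z / ((ap : ℂ) * (am : ℂ) * (y : ℂ)))

/-- The hyperbolic gamma function `G(a₊,a₋;z) = exp(i g(a₊,a₋;z))`. -/
noncomputable def Ghyp (ap am : ℝ) (z : ℂ) : ℂ := Complex.exp (Complex.I * ghyp ap am z)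

/-- The weight-function building block
`w(b;t) = 4 sinh²(πt/a₋) ∏_{δ=±1} G(δt + i(a₋−a₊)/2)/G(δt + ia − ib)`. -/
noncomputable def wfun (ap am : ℝ) (b : ℂ) (t : ℝ) : ℂ :=
  ((4 * Real.sinh (Real.pi * t / am) ^ 2 : ℝ) : ℂ) *
    ((Ghyp ap am ((t : ℂ) + Complex.I * ((am - ap : ℝ) : ℂ) / 2) /
        Ghyp ap am ((t : ℂ) + Complex.I * (((ap + am) / 2 : ℝ) : ℂ) - Complex.I * b)) *
      (Ghyp ap am (-(t : ℂ) + Complex.I * ((am - ap : ℝ) : ℂ) / 2) /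
        Ghyp ap am (-(t : ℂ) + Complex.I * (((ap + am) / 2 : ℝ) : ℂ) - Complex.I * b)))

/-- The kernel-function factor `G(w−ib/2)/G(w+ib/2)`. -/
noncomputable def rker (ap am : ℝ) (b : ℂ) (w : ℂ) : ℂ :=
  Ghyp ap am (w - Complex.I * b / 2) / Ghyp ap am (w + Complex.I * b / 2)

/-- The recursively defined joint eigenfunctions: `J₁(b;x,y) = exp(iαxy)` and, for `N ≥ 2`,
`J_N(b;x,y) = (exp(iαy_N(x₁+⋯+x_N))/(N−1)!) ∫_{ℝ^{N−1}} W_{N−1}(b;z) 𝒮_N^♯(b;x,z)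
J_{N−1}(b;z,(y₁−y_N,…,y_{N−1}−y_N)) dz`. -/
noncomputable def Jrec (ap am : ℝ) (b : ℂ) : (N : ℕ) → (Fin N → ℝ) → (Fin N → ℝ) → ℂ
  | 0, _, _ => 1
  | 1, x, y => Complex.exp (Complex.I * (alphaPar ap am : ℂ) * (x 0 : ℂ) * (y 0 : ℂ))
  | (N + 2), x, y =>
      (Complex.exp (Complex.I * (alphaPar ap am : ℂ) * (y (Fin.last (N + 1)) : ℂ) *
          ∑ j : Fin (N + 2), (x j : ℂ)) / (Nat.factorial (N + 1) : ℂ)) *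
        ∫ z : Fin (N + 1) → ℝ,
          (∏ q ∈ Finset.univ.filter (fun q : Fin (N + 1) × Fin (N + 1) => q.1 < q.2),
            wfun ap am b (z q.1 - z q.2)) *
          (∏ j : Fin (N + 2), ∏ k : Fin (N + 1), rker ap am b ((x j : ℂ) - (z k : ℂ))) *
          Jrec ap am b (N + 1) z
            (fun j => y (Fin.castSucc j) - y (Fin.last (N + 1)))

/-- The domain `D_N = {(b,x) ∈ S_a × ℂ^N : max_{j<k}|Im(x_j−x_k)| < 2a − Re b}`. -/
def DN (ap am : ℝ) (N : ℕ) : Set (ℂ × (Fin N → ℂ)) :=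
  {p | (0 < p.1.re ∧ p.1.re < ap + am) ∧
    ∀ j k : Fin N, |(p.2 j - p.2 k).im| < ap + am - p.1.re}

/-!
Write `γ = α Re b / 2`. The integral `∫₀^∞ (1 - cos 2yt) / y² dy = π|t|` shows that
`Im g(z) + (α/2) |Re z| Im z` is bounded on closed substrips of `|Im z| < a`. Hence the factors of
the kernel decay like `exp (-γ |x_j - z_k|)`, and those of the weight grow at most like
`exp (2γ |z_j - z_k|)`. For `N` points `x_j` and `N - 1` points `z_k` one has
`∑_{j<k} |z_j - z_k| + ∑_{j<k} |x_j - x_k| ≤ ∑_{j,k} |x_j - z_k|`, so a bound of `J_{N-1}` by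
`exp (-(γ - ε) ∑_{j<k} |z_j - z_k|)` for every `ε > 0` makes the integral for `J_N` converge
absolutely and yields the same bound for `J_N`.

Differentiation under the integral sign gives holomorphy in `(b, x)` as long as
`|Im x_j| < a - Re b / 2` for all `j`. A common real shift `t` of the `x_j` multiplies `J_N` by
`exp (iαt ∑ y_j)`; letting `t` become complex defines the extension, because every point of `D_N`
has a common complex shift into that smaller region. The extension is unique by the identity
theorem on the complex line through `Re x` and `x`.
-/

open Filter Topology Set

section ParametricIntegrals

variable {E F Z : Type*} [NormedAddCommGroup E] [NormedSpace ℂ E]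
  [NormedAddCommGroup F] [NormedSpace ℂ F] [MeasurableSpace Z] {μ : Measure Z}

lemma aestronglyMeasurable_clm_of_apply [FiniteDimensional ℂ E] {L : Z → E →L[ℂ] F}
    (hL : ∀ v, AEStronglyMeasurable (fun z => L z v) μ) : AEStronglyMeasurable L μ := by
  let B := Module.finBasis ℂ E
  have expansion : L = fun z => ∑ i, (LinearMap.toContinuousLinearMap (B.coord i)).smulRight
      (L z (B i)) := by
    ext z v
    trans L z (∑ i, B.repr v i • B i)
    · rw [B.sum_repr]
    · simp only [map_sum, map_smul, sum_apply, ContinuousLinearMap.smulRight_apply,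
        LinearMap.coe_toContinuousLinearMap', Module.Basis.coord_apply]
  rw [expansion]
  refine Finset.aestronglyMeasurable_fun_sum _ fun i _ => ?_
  exact (ContinuousLinearMap.smulRightL ℂ E F
    (LinearMap.toContinuousLinearMap (B.coord i))).continuous.comp_aestronglyMeasurable (hL (B i))

lemma aestronglyMeasurable_fderiv_of_nhds [FiniteDimensional ℂ E] {f : E → Z → F} {p₀ : E}
    (hf : ∀ᶠ p in 𝓝 p₀, AEStronglyMeasurable (f p) μ)
    (hd : ∀ᵐ z ∂μ, DifferentiableAt ℂ (fun p => f p z) p₀) :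
    AEStronglyMeasurable (fun z => fderiv ℂ (fun p => f p z) p₀) μ := by
  refine aestronglyMeasurable_clm_of_apply fun v => ?_
  have step_tendsto : Tendsto (fun n : ℕ => p₀ + ((n : ℂ) + 1)⁻¹ • v) atTop (𝓝 p₀) := by
    have h := tendsto_one_div_add_atTop_nhds_zero_nat (𝕜 := ℂ)
    simpa using (h.smul_const v).const_add p₀
  obtain ⟨n₀, hn₀⟩ := eventually_atTop.1 (step_tendsto.eventually hf)
  refine aestronglyMeasurable_of_tendsto_ae (u := atTop)
    (f := fun (n : ℕ) z => (((n + n₀ : ℕ) : ℂ) + 1) •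
      (f (p₀ + (((n + n₀ : ℕ) : ℂ) + 1)⁻¹ • v) z - f p₀ z))
    (fun n => ((hn₀ _ (Nat.le_add_left _ _)).sub hf.self_of_nhds).const_smul _) ?_
  filter_upwards [hd] with z hz
  refine hz.hasFDerivAt.lim v (c := fun n : ℕ => ((n + n₀ : ℕ) : ℂ) + 1) ?_
  have h := tendsto_natCast_atTop_atTop (R := ℝ).comp (tendsto_add_atTop_nat (n₀ + 1))
  refine h.congr fun n => ?_
  rw [← Nat.cast_succ, Complex.norm_natCast]
  rfl

lemma norm_fderiv_le_of_norm_le {f : E → F} {p : E} {r B : ℝ} (hr : 0 < r)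
    (hd : DifferentiableOn ℂ f (Metric.ball p r)) (hB : ∀ q ∈ Metric.ball p r, ‖f q‖ ≤ B) :
    ‖fderiv ℂ f p‖ ≤ 2 * B / r := by
  refine Complex.norm_fderiv_le_div_of_mapsTo_ball hd (fun q hq => ?_) hr
  rw [Metric.mem_closedBall, dist_eq_norm]
  linarith [norm_sub_le (f q) (f p), hB q hq, hB p (Metric.mem_ball_self hr)]

/- Cauchy's estimate turns the bound on `f` into an integrable bound on its derivative. -/
theorem differentiableAt_integral_of_norm_le [FiniteDimensional ℂ E]
    {f : E → Z → F} {V : Set E} {p₀ : E} {B : Z → ℝ} (hV : V ∈ 𝓝 p₀) (hB : Integrable B μ)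
    (hm : ∀ p ∈ V, AEStronglyMeasurable (f p) μ)
    (hd : ∀ᵐ z ∂μ, DifferentiableOn ℂ (fun p => f p z) V)
    (hle : ∀ᵐ z ∂μ, ∀ p ∈ V, ‖f p z‖ ≤ B z) :
    DifferentiableAt ℂ (fun p => ∫ z, f p z ∂μ) p₀ := by
  obtain ⟨R, hR, hRV⟩ := Metric.mem_nhds_iff.1 hV
  have hR2 : 0 < R / 2 := half_pos hR
  have ball_subset : ∀ p ∈ Metric.ball p₀ (R / 2), Metric.ball p (R / 2) ⊆ V := fun p hp =>
    (Metric.ball_subset_ball' (by linarith [Metric.mem_ball.1 hp])).trans hRV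
  have mem_nhds : ∀ p ∈ Metric.ball p₀ (R / 2), V ∈ 𝓝 p := fun p hp =>
    mem_of_superset (Metric.ball_mem_nhds p hR2) (ball_subset p hp)
  refine (hasFDerivAt_integral_of_dominated_of_fderiv_le (𝕜 := ℂ)
    (F' := fun p z => fderiv ℂ (fun p => f p z) p) (bound := fun z => 2 * B z / (R / 2))
    (Metric.ball_mem_nhds p₀ hR2) (mem_of_superset hV hm) ?_ ?_ ?_
    ((hB.const_mul 2).div_const _) ?_).differentiableAt
  · refine hB.mono' (hm _ (mem_of_mem_nhds hV)) ?_
    filter_upwards [hle] with z hz using hz p₀ (mem_of_mem_nhds hV)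
  · refine aestronglyMeasurable_fderiv_of_nhds (mem_of_superset hV hm) ?_
    filter_upwards [hd] with z hz using hz.differentiableAt hV
  · filter_upwards [hd, hle] with z hz hz' p hp
    exact norm_fderiv_le_of_norm_le hR2 (hz.mono (ball_subset p hp))
      fun q hq => hz' q (ball_subset p hp hq)
  · filter_upwards [hd] with z hz p hp using (hz.differentiableAt (mem_nhds p hp)).hasFDerivAt

end ParametricIntegrals

section ElementaryEstimates

lemma norm_sin_le_exp_abs_im (w : ℂ) : ‖Complex.sin w‖ ≤ Real.exp |w.im| := by
  have norm_exp_neg : ‖Complex.exp (-w * I)‖ ≤ Real.exp |w.im| := by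
    rw [Complex.norm_exp]
    simpa using le_abs_self w.im
  have norm_exp_pos : ‖Complex.exp (w * I)‖ ≤ Real.exp |w.im| := by
    rw [Complex.norm_exp]
    simpa using neg_le_abs w.im
  rw [Complex.sin, norm_div, norm_mul, Complex.norm_I, mul_one, Complex.norm_ofNat]
  linarith [norm_sub_le (Complex.exp (-w * I)) (Complex.exp (w * I))]

lemma norm_sin_sub_self_le (w : ℂ) : ‖Complex.sin w - w‖ ≤ ‖w‖ ^ 3 * Real.exp ‖w‖ := by
  let remainder (v : ℂ) : ℂ := Complex.exp v - ∑ m ∈ Finset.range 3, v ^ m / (m.factorial : ℂ)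
  have remainder_le (v : ℂ) (hv : ‖v‖ = ‖w‖) : ‖remainder v‖ ≤ ‖w‖ ^ 3 * Real.exp ‖w‖ :=
    hv ▸ Complex.norm_exp_sub_sum_le_norm_mul_exp v 3
  have sin_sub_self : Complex.sin w - w = (remainder (-w * I) - remainder (w * I)) * I / 2 := by
    simp only [Complex.sin, remainder, Finset.sum_range_succ, Finset.sum_range_zero]
    linear_combination -w * I_sq
  rw [sin_sub_self, norm_div, norm_mul, Complex.norm_I, mul_one, Complex.norm_ofNat]
  linarith [norm_sub_le (remainder (-w * I)) (remainder (w * I)),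
    remainder_le (-w * I) (by simp), remainder_le (w * I) (by simp)]

lemma sinh_le_mul_cosh {x : ℝ} (hx : 0 ≤ x) : Real.sinh x ≤ x * Real.cosh x := by
  have mono : MonotoneOn (fun x : ℝ => x * Real.cosh x - Real.sinh x) (Ici 0) := by
    refine monotoneOn_of_deriv_nonneg (convex_Ici 0) (by fun_prop) (by fun_prop) fun t ht => ?_
    rw [interior_Ici] at ht
    have deriv_eq : HasDerivAt (fun x : ℝ => x * Real.cosh x - Real.sinh x)
        (1 * Real.cosh t + t * Real.sinh t - Real.cosh t) t :=
      ((hasDerivAt_id t).mul (Real.hasDerivAt_cosh t)).sub (Real.hasDerivAt_sinh t)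
    rw [deriv_eq.deriv]
    linarith [mul_nonneg (le_of_lt ht) (Real.sinh_nonneg_iff.2 (le_of_lt ht))]
  have h := mono self_mem_Ici hx hx
  simp only [zero_mul, Real.sinh_zero, sub_zero] at h
  linarith

lemma sinh_le_mul_exp_half_sq {x : ℝ} (hx : 0 ≤ x) :
    Real.sinh x ≤ x * Real.exp (x ^ 2 / 2) :=
  (sinh_le_mul_cosh hx).trans (mul_le_mul_of_nonneg_left (Real.cosh_le_exp_half_sq x) hx)

lemma exp_mul_le_sinh {x x₀ : ℝ} (hx : x₀ ≤ x) :
    Real.exp x * ((1 - Real.exp (-2 * x₀)) / 2) ≤ Real.sinh x := by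
  have exp_neg_eq : Real.exp (-x) = Real.exp x * Real.exp (-2 * x) := by
    rw [← Real.exp_add]
    ring_nf
  have exp_le : Real.exp (-2 * x) ≤ Real.exp (-2 * x₀) := Real.exp_le_exp.2 (by linarith)
  rw [Real.sinh_eq, exp_neg_eq]
  nlinarith [Real.exp_pos x]

lemma mul_le_sinh_mul_sinh {s t : ℝ} (hs : 0 ≤ s) (ht : 0 ≤ t) :
    s * t ≤ Real.sinh s * Real.sinh t :=
  mul_le_mul (Real.self_le_sinh_iff.2 hs) (Real.self_le_sinh_iff.2 ht) ht
    (Real.sinh_nonneg_iff.2 hs)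

lemma abs_one_div_sinh_mul_sinh_sub_le {s t : ℝ} (hs : 0 < s) (ht : 0 < t) :
    |1 / (Real.sinh s * Real.sinh t) - 1 / (s * t)| ≤ (s ^ 2 + t ^ 2) / (2 * (s * t)) := by
  have hst : 0 < s * t := mul_pos hs ht
  have lower := mul_le_sinh_mul_sinh hs.le ht.le
  have upper : Real.sinh s * Real.sinh t ≤ s * t * Real.exp ((s ^ 2 + t ^ 2) / 2) :=
    calc Real.sinh s * Real.sinh t
        ≤ s * Real.exp (s ^ 2 / 2) * (t * Real.exp (t ^ 2 / 2)) :=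
          mul_le_mul (sinh_le_mul_exp_half_sq hs.le) (sinh_le_mul_exp_half_sq ht.le)
            (Real.sinh_nonneg_iff.2 ht.le) (by positivity)
      _ = s * t * Real.exp ((s ^ 2 + t ^ 2) / 2) := by
          rw [add_div, Real.exp_add]
          ring
  have inv_lower :
      1 / (s * t) * (1 - (s ^ 2 + t ^ 2) / 2) ≤ 1 / (Real.sinh s * Real.sinh t) :=
    calc 1 / (s * t) * (1 - (s ^ 2 + t ^ 2) / 2)
        ≤ 1 / (s * t) * Real.exp (-((s ^ 2 + t ^ 2) / 2)) := by
          gcongr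
          exact Real.one_sub_le_exp_neg _
      _ = 1 / (s * t * Real.exp ((s ^ 2 + t ^ 2) / 2)) := by
          rw [Real.exp_neg]
          field_simp
      _ ≤ 1 / (Real.sinh s * Real.sinh t) :=
          one_div_le_one_div_of_le (hst.trans_le lower) upper
  rw [abs_of_nonpos (sub_nonpos.2 (one_div_le_one_div_of_le hst lower))]
  have split : (s ^ 2 + t ^ 2) / (2 * (s * t)) = 1 / (s * t) * ((s ^ 2 + t ^ 2) / 2) := by
    field_simp
  rw [split]
  linarith

lemma abs_abs_add_sub_abs_le (t u : ℝ) : |(|t + u| - |t|)| ≤ |u| := by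
  simpa using abs_abs_sub_abs_le (t + u) t

end ElementaryEstimates

section CosineIntegral

lemma integral_mul_exp_neg_mul_Ioi {y : ℝ} (hy : 0 < y) :
    ∫ u in Ioi (0 : ℝ), u * Real.exp (-u * y) = 1 / y ^ 2 := by
  have h := Real.integral_rpow_mul_exp_neg_mul_Ioi (a := 2) two_pos hy
  rw [Real.Gamma_two, mul_one, Real.rpow_two, one_div_pow] at h
  rw [← h]
  refine setIntegral_congr_fun measurableSet_Ioi fun u _ => ?_
  norm_num [mul_comm]

lemma integrableOn_exp_neg_mul_mul_cos {u : ℝ} (hu : 0 < u) (t : ℝ) :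
    IntegrableOn (fun y : ℝ => Real.exp (-u * y) * Real.cos (2 * y * t)) (Ioi 0) :=
  Integrable.mul_bdd (c := 1) (exp_neg_integrableOn_Ioi 0 hu) (by fun_prop)
    (Eventually.of_forall fun _ => Real.abs_cos_le_one _)

lemma integral_exp_neg_mul_mul_cos {u : ℝ} (hu : 0 < u) (t : ℝ) :
    ∫ y in Ioi (0 : ℝ), Real.exp (-u * y) * Real.cos (2 * y * t) = u / (u ^ 2 + 4 * t ^ 2) := by
  have re_neg : (((-u : ℝ) : ℂ) + 2 * t * I).re < 0 := by simpa using hu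
  have integrand_eq (y : ℝ) : Real.exp (-u * y) * Real.cos (2 * y * t) =
      RCLike.re (Complex.exp ((((-u : ℝ) : ℂ) + 2 * t * I) * y)) := by
    rw [RCLike.re_to_complex, Complex.exp_re]
    simp [mul_right_comm]
  simp_rw [integrand_eq]
  rw [integral_re (integrableOn_exp_mul_complex_Ioi re_neg 0),
    integral_exp_mul_complex_Ioi re_neg 0, ofReal_zero, mul_zero, Complex.exp_zero]
  simp only [ofReal_neg, RCLike.re_to_complex, div_re, neg_re, one_re, add_re, ofReal_re, mul_re,
    re_ofNat, im_ofNat, ofReal_im, mul_zero, sub_zero, I_re, mul_im, zero_mul, add_zero, I_im,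
    mul_one, sub_self, mul_neg, neg_mul, one_mul, neg_neg, normSq_apply, add_im, neg_im, neg_zero,
    zero_add, one_im, zero_div]
  field_simp
  ring

lemma one_sub_cos_mul_exp_eq (t u y : ℝ) : (1 - Real.cos (2 * y * t)) * (u * Real.exp (-u * y)) =
    u * (Real.exp (-u * y) - Real.exp (-u * y) * Real.cos (2 * y * t)) := by
  ring

lemma integrableOn_one_sub_cos_mul_exp {u : ℝ} (hu : 0 < u) (t : ℝ) :
    IntegrableOn (fun y : ℝ => (1 - Real.cos (2 * y * t)) * (u * Real.exp (-u * y)))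
      (Ioi 0) := by
  simp_rw [one_sub_cos_mul_exp_eq]
  exact ((exp_neg_integrableOn_Ioi 0 hu).sub (integrableOn_exp_neg_mul_mul_cos hu t)).const_mul u

lemma integral_one_sub_cos_mul_exp {u : ℝ} (hu : 0 < u) (t : ℝ) :
    ∫ y in Ioi (0 : ℝ), (1 - Real.cos (2 * y * t)) * (u * Real.exp (-u * y)) =
      4 * t ^ 2 / (u ^ 2 + 4 * t ^ 2) := by
  have denom_ne : u ^ 2 + 4 * t ^ 2 ≠ 0 := by positivity
  simp_rw [one_sub_cos_mul_exp_eq]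
  rw [integral_const_mul, integral_sub (exp_neg_integrableOn_Ioi 0 hu)
    (integrableOn_exp_neg_mul_mul_cos hu t), integral_exp_neg_mul_mul_cos hu,
    integral_exp_mul_Ioi (neg_lt_zero.2 hu), mul_zero, Real.exp_zero]
  field_simp
  ring

lemma four_mul_sq_div_eq_inv_one_add_sq {t : ℝ} (ht : t ≠ 0) (u : ℝ) :
    4 * t ^ 2 / (u ^ 2 + 4 * t ^ 2) = (1 + ((2 * |t|)⁻¹ * u) ^ 2)⁻¹ := by
  have abs_ne : |t| ≠ 0 := abs_ne_zero.2 ht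
  rw [← sq_abs t]
  field_simp
  ring

lemma integrableOn_four_mul_sq_div (t : ℝ) :
    IntegrableOn (fun u : ℝ => 4 * t ^ 2 / (u ^ 2 + 4 * t ^ 2)) (Ioi 0) := by
  rcases eq_or_ne t 0 with rfl | ht
  · simp
  simp_rw [four_mul_sq_div_eq_inv_one_add_sq ht]
  exact (integrableOn_Ioi_comp_mul_left_iff (fun x : ℝ => (1 + x ^ 2)⁻¹) 0 (by positivity)).2
    integrable_inv_one_add_sq.integrableOn

lemma integral_four_mul_sq_div (t : ℝ) :
    ∫ u in Ioi (0 : ℝ), 4 * t ^ 2 / (u ^ 2 + 4 * t ^ 2) = Real.pi * |t| := by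
  rcases eq_or_ne t 0 with rfl | ht
  · simp
  simp_rw [four_mul_sq_div_eq_inv_one_add_sq ht]
  rw [integral_comp_mul_left_Ioi (fun x : ℝ => (1 + x ^ 2)⁻¹) 0 (by positivity), mul_zero,
    integral_Ioi_inv_one_add_sq, inv_inv, smul_eq_mul, Real.arctan_zero]
  ring

lemma integrable_prod_one_sub_cos_mul_exp (t : ℝ) :
    Integrable (fun p : ℝ × ℝ => (1 - Real.cos (2 * p.1 * t)) * (p.2 * Real.exp (-p.2 * p.1)))
      ((volume.restrict (Ioi 0)).prod (volume.restrict (Ioi 0))) := by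
  rw [integrable_prod_iff' (Continuous.aestronglyMeasurable (by fun_prop))]
  constructor
  · filter_upwards [ae_restrict_mem measurableSet_Ioi] with u hu
      using integrableOn_one_sub_cos_mul_exp hu t
  · refine (integrableOn_four_mul_sq_div t).congr_fun (fun u hu => ?_) measurableSet_Ioi
    have hu0 : 0 < u := hu
    simp only [← integral_one_sub_cos_mul_exp hu0 t]
    refine integral_congr_ae (Eventually.of_forall fun y => ?_)
    have factor_nonneg := sub_nonneg.2 (Real.cos_le_one (2 * y * t))
    exact (Real.norm_of_nonneg (by positivity)).symm

lemma integral_one_sub_cos_mul_exp_right {y : ℝ} (hy : 0 < y) (t : ℝ) :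
    ∫ u in Ioi (0 : ℝ), (1 - Real.cos (2 * y * t)) * (u * Real.exp (-u * y)) =
      (1 - Real.cos (2 * y * t)) / y ^ 2 := by
  rw [integral_const_mul, integral_mul_exp_neg_mul_Ioi hy, mul_one_div]

lemma integrableOn_one_sub_cos_div_sq (t : ℝ) :
    IntegrableOn (fun y : ℝ => (1 - Real.cos (2 * y * t)) / y ^ 2) (Ioi 0) :=
  IntegrableOn.congr_fun (integrable_prod_one_sub_cos_mul_exp t).integral_prod_left
    (fun _ hy => integral_one_sub_cos_mul_exp_right hy t) measurableSet_Ioi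

/- Write `1 / y ^ 2 = ∫ u * exp (-u * y) du` and exchange the integrals. -/
theorem integral_one_sub_cos_div_sq (t : ℝ) :
    ∫ y in Ioi (0 : ℝ), (1 - Real.cos (2 * y * t)) / y ^ 2 = Real.pi * |t| := by
  rw [← setIntegral_congr_fun measurableSet_Ioi
      fun y hy => integral_one_sub_cos_mul_exp_right (mem_Ioi.1 hy) t,
    integral_integral_swap (integrable_prod_one_sub_cos_mul_exp t), ← integral_four_mul_sq_div]
  exact setIntegral_congr_fun measurableSet_Ioi fun u hu => integral_one_sub_cos_mul_exp hu t

end CosineIntegral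

section HyperbolicGamma

variable {ap am : ℝ}

/-- The integrand in the definition of `ghyp`, as a function of the argument and of the variable
of integration. -/
noncomputable def ghypIntegrand (ap am : ℝ) (z : ℂ) (y : ℝ) : ℂ :=
  (1 / (y : ℂ)) *
    (Complex.sin (2 * (y : ℂ) * z) /
        (2 * Complex.sinh ((ap : ℂ) * (y : ℂ)) * Complex.sinh ((am : ℂ) * (y : ℂ))) -
      z / ((ap : ℂ) * (am : ℂ) * (y : ℂ)))

lemma ghypIntegrand_eq_div_ofReal (z : ℂ) (y : ℝ) :
    ghypIntegrand ap am z y = Complex.sin (2 * y * z) /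
      ((2 * y * (Real.sinh (ap * y) * Real.sinh (am * y)) : ℝ) : ℂ) -
        z / ((ap * y * (am * y) : ℝ) : ℂ) := by
  rw [ghypIntegrand, mul_sub, one_div_mul_eq_div, one_div_mul_eq_div, div_div, div_div]
  push_cast
  ring_nf

lemma ghypIntegrand_eq_add {y : ℝ} (hy : y ≠ 0) (z : ℂ) :
    ghypIntegrand ap am z y =
      (Complex.sin (2 * y * z) - 2 * y * z) /
          ((2 * y * (Real.sinh (ap * y) * Real.sinh (am * y)) : ℝ) : ℂ) +
        z * ((1 / (Real.sinh (ap * y) * Real.sinh (am * y)) -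
          1 / (ap * y * (am * y)) : ℝ) : ℂ) := by
  have hy' : (y : ℂ) ≠ 0 := ofReal_ne_zero.2 hy
  rw [ghypIntegrand_eq_div_ofReal, sub_div]
  have cancel : (2 * y * z : ℂ) /
      ((2 * y * (Real.sinh (ap * y) * Real.sinh (am * y)) : ℝ) : ℂ) =
        z / ((Real.sinh (ap * y) * Real.sinh (am * y) : ℝ) : ℂ) := by
    rw [ofReal_mul (2 * y), ofReal_mul 2 y, ofReal_ofNat]
    exact mul_div_mul_left _ _ (mul_ne_zero two_ne_zero hy')
  rw [cancel, ofReal_sub, ofReal_div, ofReal_div, ofReal_one, mul_sub, mul_one_div, mul_one_div]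
  ring

lemma norm_ofReal_of_pos {r : ℝ} (hr : 0 < r) : ‖(r : ℂ)‖ = r := by
  rw [Complex.norm_real, Real.norm_of_nonneg hr.le]

lemma norm_ghypIntegrand_le_of_le_one (hap : 0 < ap) (ham : 0 < am) {R y : ℝ} {z : ℂ}
    (hy : 0 < y) (hy1 : y ≤ 1) (hz : ‖z‖ ≤ R) :
    ‖ghypIntegrand ap am z y‖ ≤ 4 * R ^ 3 * Real.exp (2 * R) / (ap * am) +
      R * ((ap ^ 2 + am ^ 2) / (2 * (ap * am))) := by
  have hR : 0 ≤ R := (norm_nonneg z).trans hz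
  have norm_arg : ‖(2 * y * z : ℂ)‖ ≤ 2 * y * R := by
    rw [norm_mul, norm_mul, norm_ofReal_of_pos hy, Complex.norm_ofNat]
    gcongr
  have norm_arg' : ‖(2 * y * z : ℂ)‖ ≤ 2 * R := norm_arg.trans (by nlinarith)
  have denom_le := mul_le_sinh_mul_sinh (mul_pos hap hy).le (mul_pos ham hy).le
  have denom_pos : 0 < Real.sinh (ap * y) * Real.sinh (am * y) :=
    lt_of_lt_of_le (by positivity) denom_le
  rw [ghypIntegrand_eq_add hy.ne']
  refine (norm_add_le _ _).trans (add_le_add ?_ ?_)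
  · rw [norm_div, norm_ofReal_of_pos (mul_pos (by positivity) denom_pos)]
    calc ‖Complex.sin (2 * y * z) - 2 * y * z‖ /
            (2 * y * (Real.sinh (ap * y) * Real.sinh (am * y)))
        ≤ (2 * y * R) ^ 3 * Real.exp (2 * R) / (2 * y * (ap * y * (am * y))) := by
          gcongr
          exact (norm_sin_sub_self_le _).trans (by gcongr)
      _ = 4 * R ^ 3 * Real.exp (2 * R) / (ap * am) := by field_simp; ring
  · rw [norm_mul, Complex.norm_real, Real.norm_eq_abs]
    refine mul_le_mul hz ?_ (abs_nonneg _) hR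
    refine (abs_one_div_sinh_mul_sinh_sub_le (mul_pos hap hy) (mul_pos ham hy)).trans_eq ?_
    field_simp

lemma exp_mul_le_sinh_mul {a y : ℝ} (ha : 0 < a) (hy : 1 ≤ y) :
    Real.exp (a * y) * ((1 - Real.exp (-2 * a)) / 2) ≤ Real.sinh (a * y) :=
  exp_mul_le_sinh (by nlinarith)

lemma norm_ghypIntegrand_le_of_one_le (hap : 0 < ap) (ham : 0 < am) {σ R y : ℝ} {z : ℂ}
    (hy : 1 ≤ y) (hz : ‖z‖ ≤ R) (hσ : |z.im| ≤ σ) :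
    ‖ghypIntegrand ap am z y‖ ≤
      1 / (2 * ((1 - Real.exp (-2 * ap)) / 2 * ((1 - Real.exp (-2 * am)) / 2))) *
          Real.exp (-(ap + am - 2 * σ) * y) + R / (ap * am) * (y ^ 2)⁻¹ := by
  have : 0 < y := one_pos.trans_le hy
  have factor_pos {a : ℝ} (ha : 0 < a) : 0 < (1 - Real.exp (-2 * a)) / 2 := by
    have : Real.exp (-2 * a) < 1 := Real.exp_lt_one_iff.2 (by linarith)
    linarith
  set cp := (1 - Real.exp (-2 * ap)) / 2
  set cm := (1 - Real.exp (-2 * am)) / 2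
  have hcp : 0 < cp := factor_pos hap
  have hcm : 0 < cm := factor_pos ham
  have sinh_pos {a : ℝ} (ha : 0 < a) : 0 < Real.sinh (a * y) := Real.sinh_pos_iff.2 (by positivity)
  have denom_pos := mul_pos (sinh_pos hap) (sinh_pos ham)
  have sin_le : ‖Complex.sin (2 * y * z)‖ ≤ Real.exp (2 * σ * y) := by
    refine (norm_sin_le_exp_abs_im _).trans (Real.exp_le_exp.2 ?_)
    have im_eq : (2 * y * z : ℂ).im = 2 * y * z.im := by simp
    rw [im_eq, abs_mul, abs_of_pos (by positivity)]
    nlinarith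
  rw [ghypIntegrand_eq_div_ofReal]
  refine (norm_sub_le _ _).trans (add_le_add ?_ ?_)
  · rw [norm_div, norm_ofReal_of_pos (mul_pos (by positivity) denom_pos)]
    calc ‖Complex.sin (2 * y * z)‖ / (2 * y * (Real.sinh (ap * y) * Real.sinh (am * y)))
        ≤ Real.exp (2 * σ * y) /
            (2 * 1 * ((Real.exp (ap * y) * cp) * (Real.exp (am * y) * cm))) := by
          gcongr
          · exact exp_mul_le_sinh_mul hap hy
          · exact exp_mul_le_sinh_mul ham hy
      _ = 1 / (2 * (cp * cm)) * Real.exp (-(ap + am - 2 * σ) * y) := by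
          rw [show -(ap + am - 2 * σ) * y = 2 * σ * y - ap * y - am * y by ring,
            Real.exp_sub, Real.exp_sub]
          field_simp
  · rw [norm_div, norm_ofReal_of_pos (by positivity)]
    calc ‖z‖ / (ap * y * (am * y)) ≤ R / (ap * y * (am * y)) := by gcongr
      _ = R / (ap * am) * (y ^ 2)⁻¹ := by field_simp

lemma integrableOn_Ioi_inv_sq {c : ℝ} (hc : 0 < c) :
    IntegrableOn (fun y : ℝ => (y ^ 2)⁻¹) (Ioi c) := by
  refine (integrableOn_Ioi_rpow_of_lt (a := -2) (by norm_num) hc).congr_fun ?_ measurableSet_Ioi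
  intro y hy
  simp only [Real.rpow_neg (hc.trans hy).le, Real.rpow_two]

lemma exists_integrableOn_bound_ghypIntegrand (hap : 0 < ap) (ham : 0 < am) (R : ℝ) {σ : ℝ}
    (hσ : 2 * σ < ap + am) :
    ∃ B : ℝ → ℝ, IntegrableOn B (Ioi 0) ∧ ∀ y ∈ Ioi (0 : ℝ), ∀ z : ℂ, |z.im| ≤ σ → ‖z‖ ≤ R →
      ‖ghypIntegrand ap am z y‖ ≤ B y := by
  classical
  let B₀ : ℝ := 4 * R ^ 3 * Real.exp (2 * R) / (ap * am) +
    R * ((ap ^ 2 + am ^ 2) / (2 * (ap * am)))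
  let B₁ (y : ℝ) : ℝ :=
    1 / (2 * ((1 - Real.exp (-2 * ap)) / 2 * ((1 - Real.exp (-2 * am)) / 2))) *
      Real.exp (-(ap + am - 2 * σ) * y) + R / (ap * am) * (y ^ 2)⁻¹
  have integrableOn_B₁ : IntegrableOn B₁ (Ioi 1) :=
    ((exp_neg_integrableOn_Ioi 1 (by linarith)).const_mul _).add
      ((integrableOn_Ioi_inv_sq one_pos).const_mul _)
  refine ⟨(Iic 1).piecewise (fun _ => B₀) B₁, ?_, fun y hy z hzσ hzR => ?_⟩
  · rw [← Ioc_union_Ioi_eq_Ioi zero_le_one]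
    refine IntegrableOn.union ?_ ?_
    · refine IntegrableOn.congr_fun (f := fun _ => B₀) (by simp) ?_ measurableSet_Ioc
      exact (piecewise_eqOn _ _ _).symm.mono Ioc_subset_Iic_self
    · refine integrableOn_B₁.congr_fun ?_ measurableSet_Ioi
      exact (piecewise_eqOn_compl _ _ _).symm.mono compl_Iic.superset
  · rcases le_or_gt y 1 with hy1 | hy1
    · rw [piecewise_eq_of_mem _ _ _ (mem_Iic.2 hy1)]
      exact norm_ghypIntegrand_le_of_le_one hap ham hy hy1 hzR
    · rw [piecewise_eq_of_notMem _ _ _ (notMem_Iic.2 hy1)]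
      exact norm_ghypIntegrand_le_of_one_le hap ham hy1.le hzR hzσ

lemma aestronglyMeasurable_ghypIntegrand (z : ℂ) :
    AEStronglyMeasurable (ghypIntegrand ap am z) (volume.restrict (Ioi 0)) := by
  refine Measurable.aestronglyMeasurable ?_
  unfold ghypIntegrand
  fun_prop

lemma integrableOn_ghypIntegrand (hap : 0 < ap) (ham : 0 < am) {z : ℂ}
    (hz : 2 * |z.im| < ap + am) : IntegrableOn (ghypIntegrand ap am z) (Ioi 0) := by
  obtain ⟨B, hB, hle⟩ := exists_integrableOn_bound_ghypIntegrand hap ham ‖z‖ hz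
  refine Integrable.mono' hB (aestronglyMeasurable_ghypIntegrand z) ?_
  filter_upwards [ae_restrict_mem measurableSet_Ioi] with y hy using hle y hy z le_rfl le_rfl

/-- The open strip `|Im z| < a` on which the integral defining `ghyp` converges. -/
def ghypStrip (ap am : ℝ) : Set ℂ := {z | 2 * |z.im| < ap + am}

lemma isOpen_ghypStrip : IsOpen (ghypStrip ap am) :=
  isOpen_lt (by fun_prop) continuous_const

lemma differentiableOn_ghyp (hap : 0 < ap) (ham : 0 < am) :
    DifferentiableOn ℂ (ghyp ap am) (ghypStrip ap am) := by
  intro z₀ hz₀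
  obtain ⟨σ, hσz, hσ⟩ := exists_between (show |z₀.im| < (ap + am) / 2 by
    linarith [show 2 * |z₀.im| < ap + am from hz₀])
  obtain ⟨B, hB, hle⟩ := exists_integrableOn_bound_ghypIntegrand hap ham (‖z₀‖ + 1)
    (show 2 * σ < ap + am by linarith)
  have nhds_mem : {z : ℂ | |z.im| < σ ∧ ‖z‖ < ‖z₀‖ + 1} ∈ 𝓝 z₀ :=
    (continuous_im.abs.continuousAt.eventually_lt_const hσz).and
      (continuous_norm.continuousAt.eventually_lt_const (lt_add_one _))
  refine (differentiableAt_integral_of_norm_le nhds_mem hB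
    (fun z _ => aestronglyMeasurable_ghypIntegrand z) ?_ ?_).differentiableWithinAt
  · refine Eventually.of_forall fun y => Differentiable.differentiableOn ?_
    unfold ghypIntegrand
    fun_prop
  · filter_upwards [ae_restrict_mem measurableSet_Ioi] with y hy z hz
      using hle y hy z hz.1.le hz.2.le

lemma differentiableOn_Ghyp (hap : 0 < ap) (ham : 0 < am) :
    DifferentiableOn ℂ (Ghyp ap am) (ghypStrip ap am) :=
  ((differentiableOn_ghyp hap ham).const_mul I).cexp

lemma differentiableAt_Ghyp (hap : 0 < ap) (ham : 0 < am) {z : ℂ} (hz : z ∈ ghypStrip ap am) :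
    DifferentiableAt ℂ (Ghyp ap am) z :=
  (differentiableOn_Ghyp hap ham).differentiableAt (isOpen_ghypStrip.mem_nhds hz)

lemma Ghyp_ne_zero (z : ℂ) : Ghyp ap am z ≠ 0 := Complex.exp_ne_zero _

lemma norm_Ghyp (z : ℂ) : ‖Ghyp ap am z‖ = Real.exp (-(ghyp ap am z).im) := by
  simp [Ghyp, Complex.norm_exp]

lemma alphaPar_pos (hap : 0 < ap) (ham : 0 < am) : 0 < alphaPar ap am := by
  unfold alphaPar
  positivity

lemma im_sin_two_mul (y : ℝ) (z : ℂ) : (Complex.sin (2 * y * z)).im =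
    Real.cos (2 * y * z.re) * Real.sinh (2 * y * z.im) := by
  have arg_eq : (2 * y * z : ℂ) = ((2 * y * z.re : ℝ) : ℂ) + ((2 * y * z.im : ℝ) : ℂ) * I := by
    conv_lhs => rw [← Complex.re_add_im z]
    push_cast
    ring
  rw [arg_eq, Complex.sin_add_mul_I, ← ofReal_sin, ← ofReal_cosh, ← ofReal_cos, ← ofReal_sinh,
    ← ofReal_mul, ← ofReal_mul, add_im, ofReal_im, im_ofReal_mul, I_im, mul_one, zero_add]

lemma im_ghypIntegrand (z : ℂ) (y : ℝ) :
    (ghypIntegrand ap am z y).im =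
      Real.cos (2 * y * z.re) * (ghypIntegrand ap am (z.im * I) y).im -
        z.im / (ap * am) * ((1 - Real.cos (2 * y * z.re)) / y ^ 2) := by
  simp only [ghypIntegrand_eq_div_ofReal, sub_im, div_ofReal_im, im_sin_two_mul, re_ofReal_mul,
    im_ofReal_mul, I_re, I_im, mul_zero, mul_one, Real.cos_zero, one_mul]
  ring

/- Subtracting `Im z` times the cosine integral leaves an integrand dominated by its value on the
imaginary axis. -/
theorem exists_abs_im_ghyp_add_le (hap : 0 < ap) (ham : 0 < am) {σ : ℝ}
    (hσ : 2 * σ < ap + am) :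
    ∃ C : ℝ, ∀ z : ℂ, |z.im| ≤ σ →
      |(ghyp ap am z).im + alphaPar ap am / 2 * |z.re| * z.im| ≤ C := by
  obtain ⟨B, hB, hle⟩ := exists_integrableOn_bound_ghypIntegrand hap ham σ hσ
  refine ⟨∫ y in Ioi (0 : ℝ), B y, fun z hz => ?_⟩
  have integrable_z := integrableOn_ghypIntegrand hap ham (z := z) (by linarith)
  have integrable_axis := integrableOn_ghypIntegrand hap ham (z := z.im * I)
    (by simpa using by linarith)
  have integrable_cos : IntegrableOn
      (fun y => Real.cos (2 * y * z.re) * (ghypIntegrand ap am (z.im * I) y).im) (Ioi 0) :=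
    Integrable.bdd_mul (c := 1) integrable_axis.im (by fun_prop)
      (Eventually.of_forall fun _ => Real.abs_cos_le_one _)
  have im_eq : (ghyp ap am z).im + alphaPar ap am / 2 * |z.re| * z.im =
      ∫ y in Ioi (0 : ℝ), Real.cos (2 * y * z.re) * (ghypIntegrand ap am (z.im * I) y).im := by
    have im_integral : (ghyp ap am z).im = ∫ y in Ioi (0 : ℝ), (ghypIntegrand ap am z y).im :=
      (integral_im integrable_z).symm
    simp_rw [im_ghypIntegrand z] at im_integral
    rw [im_integral, integral_sub integrable_cos
      ((integrableOn_one_sub_cos_div_sq z.re).const_mul _), integral_const_mul,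
      integral_one_sub_cos_div_sq, alphaPar]
    ring
  rw [im_eq, ← Real.norm_eq_abs]
  refine norm_integral_le_of_norm_le hB ?_
  filter_upwards [ae_restrict_mem measurableSet_Ioi] with y hy
  rw [norm_mul]
  calc ‖Real.cos (2 * y * z.re)‖ * ‖(ghypIntegrand ap am (z.im * I) y).im‖
      ≤ 1 * ‖ghypIntegrand ap am (z.im * I) y‖ := by
        gcongr
        · exact Real.abs_cos_le_one _
        · exact Complex.abs_im_le_norm _
    _ ≤ B y := by
        rw [one_mul]
        exact hle y hy _ (by simpa using hz) (by simpa using hz)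

lemma exists_abs_im_ghyp_add_ofReal_le (hap : 0 < ap) (ham : 0 < am) (R : ℝ) {σ : ℝ}
    (hσ : 2 * σ < ap + am) :
    ∃ C : ℝ, ∀ t : ℝ, ∀ z : ℂ, |z.re| ≤ R → |z.im| ≤ σ →
      |(ghyp ap am (t + z)).im + alphaPar ap am / 2 * |t| * z.im| ≤ C := by
  obtain ⟨C, hC⟩ := exists_abs_im_ghyp_add_le hap ham hσ
  refine ⟨C + alphaPar ap am / 2 * R * σ, fun t z hre him => ?_⟩
  have hα := alphaPar_pos hap ham
  have main := hC (t + z) (by simpa using him)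
  simp only [add_re, ofReal_re, add_im, ofReal_im, zero_add] at main
  have shift : |alphaPar ap am / 2 * (|t + z.re| - |t|) * z.im| ≤
      alphaPar ap am / 2 * R * σ := by
    rw [abs_mul, abs_mul, abs_of_pos (half_pos hα)]
    have hR : 0 ≤ R := (abs_nonneg _).trans hre
    exact mul_le_mul (mul_le_mul_of_nonneg_left ((abs_abs_add_sub_abs_le t z.re).trans hre)
      (half_pos hα).le) him (abs_nonneg _) (by positivity)
  have split : (ghyp ap am (t + z)).im + alphaPar ap am / 2 * |t| * z.im =
      ((ghyp ap am (t + z)).im + alphaPar ap am / 2 * |t + z.re| * z.im) -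
        alphaPar ap am / 2 * (|t + z.re| - |t|) * z.im := by ring
  rw [split]
  exact (abs_sub _ _).trans (add_le_add main shift)

end HyperbolicGamma

section KernelAndWeight

variable {ap am : ℝ}

lemma exists_norm_Ghyp_div_Ghyp_le (hap : 0 < ap) (ham : 0 < am) (R : ℝ) {σ : ℝ}
    (hσ : 2 * σ < ap + am) :
    ∃ C > 0, ∀ t : ℝ, ∀ u v : ℂ, |u.re| ≤ R → |u.im| ≤ σ → |v.re| ≤ R → |v.im| ≤ σ →
      ‖Ghyp ap am (t + u) / Ghyp ap am (t + v)‖ ≤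
        C * Real.exp (alphaPar ap am / 2 * |t| * (u.im - v.im)) := by
  obtain ⟨C, hC⟩ := exists_abs_im_ghyp_add_ofReal_le hap ham R hσ
  refine ⟨Real.exp (2 * C), Real.exp_pos _, fun t u v hure huim hvre hvim => ?_⟩
  rw [norm_div, norm_Ghyp, norm_Ghyp, ← Real.exp_sub, ← Real.exp_add, Real.exp_le_exp]
  linarith [(abs_le.1 (hC t u hure huim)).1, (abs_le.1 (hC t v hvre hvim)).2]

lemma eventually_exp_mul_le {X : Type*} [TopologicalSpace X] {f : X → ℝ} {p₀ : X} {ε : ℝ}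
    (hf : ContinuousAt f p₀) (hε : 0 < ε) :
    ∀ᶠ p in 𝓝 p₀, ∀ r : ℝ, 0 ≤ r → Real.exp (f p * r) ≤ Real.exp ((f p₀ + ε) * r) := by
  filter_upwards [hf.eventually_lt_const (lt_add_of_pos_right _ hε)] with p hp r hr
  gcongr

theorem exists_eventually_norm_rker_le (hap : 0 < ap) (ham : 0 < am) {b₀ : ℂ} {s ε : ℝ}
    (hs : 2 * s + |b₀.re| < ap + am) (hε : 0 < ε) :
    ∃ C > 0, ∀ᶠ b in 𝓝 b₀, ∀ w : ℂ, |w.im| ≤ s →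
      ‖rker ap am b w‖ ≤ C * Real.exp ((-(alphaPar ap am / 2 * b₀.re) + ε) * |w.re|) := by
  obtain ⟨σ, hσs, hσ⟩ := exists_between (show s + |b₀.re| / 2 < (ap + am) / 2 by linarith)
  obtain ⟨C, hC, hle⟩ := exists_norm_Ghyp_div_Ghyp_le hap ham (|b₀.im| + 1)
    (show 2 * σ < ap + am by linarith)
  refine ⟨C, hC, ?_⟩
  have im_near : ∀ᶠ b in 𝓝 b₀, |b.im| < |b₀.im| + 1 :=
    continuous_im.abs.continuousAt.eventually_lt_const (lt_add_one _)
  have re_near : ∀ᶠ b in 𝓝 b₀, s + |b.re| / 2 < σ :=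
    (show ContinuousAt (fun b : ℂ => s + |b.re| / 2) b₀ by fun_prop).eventually_lt_const hσs
  have exp_near := eventually_exp_mul_le (f := fun b : ℂ => -(alphaPar ap am / 2 * b.re))
    (p₀ := b₀) (by fun_prop) hε
  filter_upwards [im_near, re_near, exp_near] with b hbim hbre hexp w hw
  have re_le : |b.im / 2| ≤ |b₀.im| + 1 := by
    rw [abs_div, abs_two]
    linarith [abs_nonneg b.im]
  have half_abs : |b.re / 2| = |b.re| / 2 := by rw [abs_div, abs_two]
  have arg_sub : w - I * b / 2 = (w.re : ℂ) + (w.im * I - I * b / 2) := by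
    rw [add_sub, re_add_im]
  have arg_add : w + I * b / 2 = (w.re : ℂ) + (w.im * I + I * b / 2) := by
    rw [← add_assoc, re_add_im]
  have key := hle w.re (w.im * I - I * b / 2) (w.im * I + I * b / 2)
    (by simpa [neg_div] using re_le)
    (by simpa using (abs_sub w.im (b.re / 2)).trans (by linarith))
    (by simpa [neg_div] using re_le)
    (by simpa using (abs_add_le w.im (b.re / 2)).trans (by linarith))
  rw [← arg_sub, ← arg_add] at key
  refine key.trans (mul_le_mul_of_nonneg_left ?_ hC.le)
  refine (Real.exp_le_exp.2 (le_of_eq ?_)).trans (hexp _ (abs_nonneg w.re))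
  simp only [sub_im, add_im, mul_im, div_ofNat_im, ofReal_re, ofReal_im, I_re, I_im]
  ring

lemma sinh_sq_le_exp_two_mul_abs (x : ℝ) : Real.sinh x ^ 2 ≤ Real.exp (2 * |x|) := by
  have sinh_le : |Real.sinh x| ≤ Real.exp |x| := by
    rw [Real.abs_sinh, Real.sinh_eq]
    linarith [Real.exp_pos |x|, Real.exp_pos (-|x|)]
  rw [← sq_abs, two_mul, Real.exp_add, ← sq]
  gcongr

lemma norm_four_mul_sinh_sq_le (ham : 0 < am) (hap : ap ≠ 0) (t : ℝ) :
    ‖((4 * Real.sinh (Real.pi * t / am) ^ 2 : ℝ) : ℂ)‖ ≤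
      4 * Real.exp (alphaPar ap am * ap * |t|) := by
  rw [Complex.norm_real, Real.norm_of_nonneg (by positivity)]
  refine mul_le_mul_of_nonneg_left ((sinh_sq_le_exp_two_mul_abs _).trans_eq ?_) zero_le_four
  rw [abs_div, abs_mul, abs_of_pos Real.pi_pos, abs_of_pos ham, alphaPar]
  field_simp

lemma exists_eventually_norm_wfun_quotient_le (hap : 0 < ap) (ham : 0 < am) {b₀ : ℂ}
    (hb₀ : b₀.re ∈ Ioo 0 (ap + am)) :
    ∃ C > 0, ∀ᶠ b in 𝓝 b₀, ∀ t : ℝ,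
      ‖Ghyp ap am (t + I * ((am - ap : ℝ) : ℂ) / 2) /
        Ghyp ap am (t + I * (((ap + am) / 2 : ℝ) : ℂ) - I * b)‖ ≤
          C * Real.exp (alphaPar ap am / 2 * |t| * (b.re - ap)) := by
  have num_lt : |(am - ap) / 2| < (ap + am) / 2 := abs_lt.2 ⟨by linarith, by linarith⟩
  have den_lt : |(ap + am) / 2 - b₀.re| < (ap + am) / 2 :=
    abs_lt.2 ⟨by linarith [hb₀.2], by linarith [hb₀.1]⟩
  obtain ⟨σ, hσ, hσ'⟩ := exists_between (max_lt num_lt den_lt)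
  obtain ⟨hσnum, hσden⟩ := max_lt_iff.1 hσ
  obtain ⟨C, hC, hle⟩ := exists_norm_Ghyp_div_Ghyp_le hap ham (|b₀.im| + 1)
    (show 2 * σ < ap + am by linarith)
  refine ⟨C, hC, ?_⟩
  have im_near : ∀ᶠ b in 𝓝 b₀, |b.im| < |b₀.im| + 1 :=
    continuous_im.abs.continuousAt.eventually_lt_const (lt_add_one _)
  have re_near : ∀ᶠ b in 𝓝 b₀, |(ap + am) / 2 - b.re| < σ :=
    (show ContinuousAt (fun b : ℂ => |(ap + am) / 2 - b.re|) b₀ by fun_prop).eventually_lt_const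
      hσden
  filter_upwards [im_near, re_near] with b hbim hbre t
  rw [add_sub_assoc]
  refine (hle t _ _ (by simpa using by positivity) (by simpa using hσnum.le)
    (by simpa using hbim.le) (by simpa using hbre.le)).trans_eq ?_
  simp only [sub_im, mul_im, div_ofNat_im, ofReal_re, ofReal_im, I_re, I_im]
  ring_nf

theorem exists_eventually_norm_wfun_le (hap : 0 < ap) (ham : 0 < am) {b₀ : ℂ} {ε : ℝ}
    (hb₀ : b₀.re ∈ Ioo 0 (ap + am)) (hε : 0 < ε) :
    ∃ C > 0, ∀ᶠ b in 𝓝 b₀, ∀ t : ℝ,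
      ‖wfun ap am b t‖ ≤ C * Real.exp ((alphaPar ap am * b₀.re + ε) * |t|) := by
  obtain ⟨C, hC, quotient_near⟩ := exists_eventually_norm_wfun_quotient_le hap ham hb₀
  refine ⟨4 * (C * C), by positivity, ?_⟩
  have exp_near := eventually_exp_mul_le (f := fun b : ℂ => alphaPar ap am * b.re)
    (p₀ := b₀) (by fun_prop) hε
  filter_upwards [quotient_near, exp_near] with b hquot hexp t
  have quotient_neg := hquot (-t)
  rw [ofReal_neg, abs_neg] at quotient_neg
  rw [wfun, norm_mul, norm_mul]
  calc _ ≤ 4 * Real.exp (alphaPar ap am * ap * |t|) *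
        (C * Real.exp (alphaPar ap am / 2 * |t| * (b.re - ap)) *
          (C * Real.exp (alphaPar ap am / 2 * |t| * (b.re - ap)))) := by
        gcongr
        · exact norm_four_mul_sinh_sq_le ham hap.ne' t
        · exact hquot t
    _ = 4 * (C * C) * Real.exp (alphaPar ap am * b.re * |t|) := by
        rw [show alphaPar ap am * b.re * |t| = alphaPar ap am * ap * |t| +
          (alphaPar ap am / 2 * |t| * (b.re - ap) + alphaPar ap am / 2 * |t| * (b.re - ap)) by ring,
          Real.exp_add, Real.exp_add]
        ring
    _ ≤ 4 * (C * C) * Real.exp ((alphaPar ap am * b₀.re + ε) * |t|) :=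
        mul_le_mul_of_nonneg_left (hexp _ (abs_nonneg t)) (by positivity)

lemma mem_ghypStrip_iff_abs_im_lt {z : ℂ} : z ∈ ghypStrip ap am ↔ |z.im| < (ap + am) / 2 := by
  rw [lt_div_iff₀' two_pos]
  rfl

lemma differentiableAt_rker (hap : 0 < ap) (ham : 0 < am) {q : ℂ × ℂ}
    (hq : 2 * |q.2.im| + |q.1.re| < ap + am) :
    DifferentiableAt ℂ (fun q : ℂ × ℂ => rker ap am q.1 q.2) q := by
  have half_abs : |q.1.re / 2| = |q.1.re| / 2 := by rw [abs_div, abs_two]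
  have num_mem : q.2 - I * q.1 / 2 ∈ ghypStrip ap am := mem_ghypStrip_iff_abs_im_lt.2 <| by
    simpa using (abs_sub q.2.im (q.1.re / 2)).trans_lt (by linarith)
  have den_mem : q.2 + I * q.1 / 2 ∈ ghypStrip ap am := mem_ghypStrip_iff_abs_im_lt.2 <| by
    simpa using (abs_add_le q.2.im (q.1.re / 2)).trans_lt (by linarith)
  have num_diff : DifferentiableAt ℂ (fun q : ℂ × ℂ => Ghyp ap am (q.2 - I * q.1 / 2)) q :=
    (differentiableAt_Ghyp hap ham num_mem).comp q
      (f := fun q : ℂ × ℂ => q.2 - I * q.1 / 2) (by fun_prop)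
  have den_diff : DifferentiableAt ℂ (fun q : ℂ × ℂ => Ghyp ap am (q.2 + I * q.1 / 2)) q :=
    (differentiableAt_Ghyp hap ham den_mem).comp q
      (f := fun q : ℂ × ℂ => q.2 + I * q.1 / 2) (by fun_prop)
  simp only [rker, div_eq_mul_inv _ (Ghyp _ _ _)]
  exact num_diff.fun_mul (den_diff.fun_inv (Ghyp_ne_zero _))

lemma wfun_numerator_mem_ghypStrip (hap : 0 < ap) (ham : 0 < am) {u : ℂ} (hu : u.im = 0) :
    u + I * ((am - ap : ℝ) : ℂ) / 2 ∈ ghypStrip ap am := by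
  have im_eq : (u + I * ((am - ap : ℝ) : ℂ) / 2).im = (am - ap) / 2 := by simp [hu]
  rw [mem_ghypStrip_iff_abs_im_lt, im_eq, abs_lt]
  constructor <;> linarith

lemma wfun_denominator_mem_ghypStrip {b : ℂ} (hb : b.re ∈ Ioo 0 (ap + am)) {u : ℂ}
    (hu : u.im = 0) : u + I * (((ap + am) / 2 : ℝ) : ℂ) - I * b ∈ ghypStrip ap am := by
  have im_eq : (u + I * (((ap + am) / 2 : ℝ) : ℂ) - I * b).im = (ap + am) / 2 - b.re := by
    simp [hu]
  rw [mem_ghypStrip_iff_abs_im_lt, im_eq, abs_lt]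
  constructor <;> linarith [hb.1, hb.2]

lemma differentiableAt_wfun (hap : 0 < ap) (ham : 0 < am) {b : ℂ}
    (hb : b.re ∈ Ioo 0 (ap + am)) (t : ℝ) : DifferentiableAt ℂ (fun b => wfun ap am b t) b := by
  have den_diff (u : ℂ) (hu : u.im = 0) :
      DifferentiableAt ℂ (fun b => Ghyp ap am (u + I * (((ap + am) / 2 : ℝ) : ℂ) - I * b)) b :=
    (differentiableAt_Ghyp hap ham (wfun_denominator_mem_ghypStrip hb hu)).comp b
      (f := fun b => u + I * (((ap + am) / 2 : ℝ) : ℂ) - I * b) (by fun_prop)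
  unfold wfun
  refine DifferentiableAt.const_mul (DifferentiableAt.fun_mul ?_ ?_) _
  · exact (differentiableAt_const _).fun_div (den_diff _ (by simp)) (Ghyp_ne_zero _)
  · exact (differentiableAt_const _).fun_div (den_diff _ (by simp)) (Ghyp_ne_zero _)

lemma continuous_wfun (hap : 0 < ap) (ham : 0 < am) {b : ℂ} (hb : b.re ∈ Ioo 0 (ap + am)) :
    Continuous (wfun ap am b) := by
  have continuous_Ghyp_comp (f : ℝ → ℂ) (hf : Continuous f) (hm : ∀ t, f t ∈ ghypStrip ap am) :
      Continuous (fun t => Ghyp ap am (f t)) :=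
    (differentiableOn_Ghyp hap ham).continuousOn.comp_continuous hf hm
  have continuous_quotient (u : ℝ → ℂ) (hu : Continuous u) (hreal : ∀ t, (u t).im = 0) :
      Continuous fun t => Ghyp ap am (u t + I * ((am - ap : ℝ) : ℂ) / 2) /
        Ghyp ap am (u t + I * (((ap + am) / 2 : ℝ) : ℂ) - I * b) :=
    (continuous_Ghyp_comp _ (by fun_prop) fun t =>
      wfun_numerator_mem_ghypStrip hap ham (hreal t)).div
    (continuous_Ghyp_comp _ (by fun_prop) fun t => wfun_denominator_mem_ghypStrip hb (hreal t))
    fun _ => Ghyp_ne_zero _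
  unfold wfun
  exact Continuous.mul (by fun_prop) ((continuous_quotient _ (by fun_prop) (by simp)).mul
    (continuous_quotient _ (by fun_prop) (by simp)))

lemma continuous_rker_sub_ofReal (hap : 0 < ap) (ham : 0 < am) {b x : ℂ}
    (hbx : 2 * |x.im| + |b.re| < ap + am) : Continuous (fun t : ℝ => rker ap am b (x - t)) := by
  refine continuous_iff_continuousAt.2 fun t => ?_
  have h := (differentiableAt_rker hap ham (q := (b, x - t)) (by simpa using hbx)).continuousAt
  exact ContinuousAt.comp (f := fun t : ℝ => (b, x - (t : ℂ))) h (by fun_prop)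

end KernelAndWeight

section PairDistances

variable {ι κ : Type*} [Fintype ι] [Fintype κ]

lemma sq_indicator_Ici_sub_indicator_Ici (s t u : ℝ) :
    ((Ici s).indicator 1 u - (Ici t).indicator 1 u : ℝ) ^ 2 =
      (Ico (min s t) (max s t)).indicator 1 u := by
  simp only [indicator_apply, mem_Ici, mem_Ico, Pi.one_apply, min_le_iff, lt_max_iff]
  grind

lemma integrable_sq_indicator_Ici_sub (s t : ℝ) :
    Integrable fun u : ℝ => ((Ici s).indicator 1 u - (Ici t).indicator 1 u : ℝ) ^ 2 := by
  simp only [sq_indicator_Ici_sub_indicator_Ici]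
  rw [integrable_indicator_iff measurableSet_Ico]
  exact (integrableOn_const_iff (C := (1 : ℝ))).2 (Or.inr (by simp))

lemma integral_sq_indicator_Ici_sub (s t : ℝ) :
    ∫ u : ℝ, ((Ici s).indicator 1 u - (Ici t).indicator 1 u : ℝ) ^ 2 = |s - t| := by
  simp only [sq_indicator_Ici_sub_indicator_Ici]
  rw [integral_indicator_one measurableSet_Ico]
  simp [Measure.real, max_sub_min_eq_abs']

lemma integrable_sum_sum_sq_indicator_Ici_sub (x : ι → ℝ) (z : κ → ℝ) :
    Integrable fun u : ℝ => ∑ i, ∑ j,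
      ((Ici (x i)).indicator 1 u - (Ici (z j)).indicator 1 u : ℝ) ^ 2 :=
  integrable_finsetSum _ fun _ _ => integrable_finsetSum _ fun _ _ =>
    integrable_sq_indicator_Ici_sub _ _

lemma integral_sum_sum_sq_indicator_Ici_sub (x : ι → ℝ) (z : κ → ℝ) :
    ∫ u : ℝ, ∑ i, ∑ j, ((Ici (x i)).indicator 1 u - (Ici (z j)).indicator 1 u : ℝ) ^ 2 =
      ∑ i, ∑ j, |x i - z j| := by
  rw [integral_finsetSum _ fun i _ => integrable_finsetSum _ fun j _ =>
    integrable_sq_indicator_Ici_sub _ _]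
  refine Finset.sum_congr rfl fun i _ => ?_
  rw [integral_finsetSum _ fun j _ => integrable_sq_indicator_Ici_sub _ _]
  exact Finset.sum_congr rfl fun j _ => integral_sq_indicator_Ici_sub _ _

lemma sum_sum_sq_sub_of_sq_eq {P : ι → ℤ} {Q : κ → ℤ} (hP : ∀ i, P i ^ 2 = P i)
    (hQ : ∀ j, Q j ^ 2 = Q j) :
    ∑ i, ∑ j, (P i - Q j) ^ 2 = Fintype.card κ * ∑ i, P i + Fintype.card ι * ∑ j, Q j -
      2 * (∑ i, P i) * ∑ j, Q j := by
  simp only [sub_sq, hP, hQ, Finset.sum_add_distrib, Finset.sum_sub_distrib, Finset.sum_const,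
    Finset.card_univ, nsmul_eq_mul, ← Finset.mul_sum, ← Finset.sum_mul]
  ring

-- With `D = ∑ P - ∑ Q` and `d = card ι - card κ`, the difference of the two sides is
-- `2 (D ^ 2 - d D)`, which is nonnegative because `D` is an integer and `|d| ≤ 1`.
lemma sum_sum_sq_sub_add_le_of_sq_eq (hcard : |(Fintype.card ι : ℤ) - Fintype.card κ| ≤ 1)
    {P : ι → ℤ} {Q : κ → ℤ} (hP : ∀ i, P i ^ 2 = P i) (hQ : ∀ j, Q j ^ 2 = Q j) :
    ∑ i, ∑ j, (Q i - Q j) ^ 2 + ∑ i, ∑ j, (P i - P j) ^ 2 ≤ 2 * ∑ i, ∑ j, (P i - Q j) ^ 2 := by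
  rw [sum_sum_sq_sub_of_sq_eq hQ hQ, sum_sum_sq_sub_of_sq_eq hP hP, sum_sum_sq_sub_of_sq_eq hP hQ]
  have mul_le_sq (d D : ℤ) (hd : |d| ≤ 1) : d * D ≤ D ^ 2 := by
    rcases eq_or_ne D 0 with rfl | hD
    · simp
    calc d * D ≤ |d| * |D| := (le_abs_self _).trans_eq (abs_mul d D)
      _ ≤ |D| * |D| :=
        mul_le_mul_of_nonneg_right (hd.trans (Int.one_le_abs hD)) (abs_nonneg D)
      _ = D ^ 2 := by rw [abs_mul_abs_self, sq]
  nlinarith [mul_le_sq _ (∑ i, P i - ∑ j, Q j) hcard]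

theorem sum_sum_abs_sub_add_le (hcard : |(Fintype.card ι : ℤ) - Fintype.card κ| ≤ 1)
    (x : ι → ℝ) (z : κ → ℝ) :
    ∑ i, ∑ j, |z i - z j| + ∑ i, ∑ j, |x i - x j| ≤ 2 * ∑ i, ∑ j, |x i - z j| := by
  simp only [← integral_sum_sum_sq_indicator_Ici_sub]
  rw [← integral_const_mul, ← integral_add (integrable_sum_sum_sq_indicator_Ici_sub z z)
    (integrable_sum_sum_sq_indicator_Ici_sub x x)]
  refine integral_mono ((integrable_sum_sum_sq_indicator_Ici_sub z z).add
    (integrable_sum_sum_sq_indicator_Ici_sub x x))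
    ((integrable_sum_sum_sq_indicator_Ici_sub x z).const_mul 2) fun u => ?_
  have indicator_eq (s : ℝ) :
      (Ici s).indicator (1 : ℝ → ℝ) u = ((Ici s).indicator (1 : ℝ → ℤ) u : ℤ) := by
    simp [indicator_apply]
  have indicator_sq (s : ℝ) :
      (Ici s).indicator (1 : ℝ → ℤ) u ^ 2 = (Ici s).indicator (1 : ℝ → ℤ) u := by
    simp [indicator_apply]
  simp only [indicator_eq]
  exact_mod_cast sum_sum_sq_sub_add_le_of_sq_eq hcard (fun i => indicator_sq (x i))
    fun j => indicator_sq (z j)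

lemma sum_sum_abs_sub_self_le (z : κ → ℝ) (c : ℝ) :
    ∑ i, ∑ j, |z i - z j| ≤ 2 * (Fintype.card κ - 1) * ∑ k, |z k - c| := by
  classical
  have abs_le (i j) :
      |z i - z j| ≤ |z i - c| + |z j - c| - if i = j then 2 * |z i - c| else 0 := by
    split_ifs with h
    · rw [h, sub_self, abs_zero]
      linarith
    · rw [abs_sub_comm (z j), sub_zero]
      exact abs_sub_le _ _ _
  refine (Finset.sum_le_sum fun i _ => Finset.sum_le_sum fun j _ => abs_le i j).trans_eq ?_
  simp only [Finset.sum_add_distrib, Finset.sum_sub_distrib, Finset.sum_const, Finset.card_univ,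
    nsmul_eq_mul, ← Finset.mul_sum, Finset.sum_ite_eq, Finset.mem_univ, if_true]
  ring

lemma le_sum_sum_abs_sub (x : ι → ℝ) (z : κ → ℝ) (c : ℝ) :
    Fintype.card ι * ∑ k, |z k - c| - Fintype.card κ * ∑ i, |x i - c| ≤
      ∑ i, ∑ j, |x i - z j| := by
  have le_abs (i j) : |z j - c| - |x i - c| ≤ |x i - z j| := by
    simpa [abs_sub_comm (z j)] using abs_sub_abs_le_abs_sub (z j - c) (x i - c)
  refine Eq.trans_le ?_ (Finset.sum_le_sum fun i _ => Finset.sum_le_sum fun j _ => le_abs i j)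
  simp only [Finset.sum_sub_distrib, Finset.sum_const, Finset.card_univ, nsmul_eq_mul,
    ← Finset.mul_sum]

lemma sum_sum_abs_sub_le (x : ι → ℝ) (z : κ → ℝ) (c : ℝ) :
    ∑ i, ∑ j, |x i - z j| ≤ Fintype.card ι * ∑ k, |z k - c| + Fintype.card κ * ∑ i, |x i - c| := by
  have abs_le (i j) : |x i - z j| ≤ |z j - c| + |x i - c| := by
    rw [add_comm, abs_sub_comm (z j)]
    exact abs_sub_le _ _ _
  refine (Finset.sum_le_sum fun i _ => Finset.sum_le_sum fun j _ => abs_le i j).trans_eq ?_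
  simp only [Finset.sum_add_distrib, Finset.sum_const, Finset.card_univ, nsmul_eq_mul,
    ← Finset.mul_sum]

/-- The sum of the mutual distances of the points `x j` on the real line; it measures the
exponential decay of the eigenfunctions. -/
noncomputable def pairDist {n : ℕ} (x : Fin n → ℝ) : ℝ :=
  ∑ q : Fin n × Fin n with q.1 < q.2, |x q.1 - x q.2|

variable {n : ℕ}

lemma pairDist_nonneg (x : Fin n → ℝ) : 0 ≤ pairDist x :=
  Finset.sum_nonneg fun _ _ => abs_nonneg _

lemma two_mul_pairDist (x : Fin n → ℝ) : 2 * pairDist x = ∑ i, ∑ j, |x i - x j| := by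
  have swap : pairDist x = ∑ q : Fin n × Fin n with q.2 < q.1, |x q.1 - x q.2| :=
    Finset.sum_nbij' Prod.swap Prod.swap (by simp) (by simp) (by simp) (by simp)
      (by simp [abs_sub_comm])
  have diagonal_free : ∑ q : Fin n × Fin n with q.2 < q.1, |x q.1 - x q.2| =
      ∑ q : Fin n × Fin n with ¬ q.1 < q.2, |x q.1 - x q.2| := by
    refine Finset.sum_subset (fun q => by simpa using le_of_lt) fun q hle hlt => ?_
    simp only [Finset.mem_filter, Finset.mem_univ, true_and, not_lt] at hle hlt
    simp [le_antisymm hle hlt]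
  rw [← Fintype.sum_prod_type' fun i j => |x i - x j|,
    ← Finset.sum_filter_add_sum_filter_not Finset.univ fun q : Fin n × Fin n => q.1 < q.2,
    ← diagonal_free, ← swap, two_mul, pairDist]

lemma sum_abs_sub_zero_le_pairDist (x : Fin (n + 1) → ℝ) : ∑ j, |x j - x 0| ≤ pairDist x := by
  have split : ∑ i, ∑ j, |x i - x j| =
      2 * ∑ j, |x j - x 0| + ∑ i : Fin n, ∑ j : Fin n, |x i.succ - x j.succ| := by
    simp only [Fin.sum_univ_succ, Finset.sum_add_distrib, sub_self, abs_zero, zero_add,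
      abs_sub_comm (x 0)]
    ring
  have : 0 ≤ ∑ i : Fin n, ∑ j : Fin n, |x i.succ - x j.succ| :=
    Finset.sum_nonneg fun _ _ => Finset.sum_nonneg fun _ _ => abs_nonneg _
  linarith [two_mul_pairDist x]

variable (x : Fin (n + 1) → ℝ) (z : Fin n → ℝ)

lemma pairDist_add_pairDist_le : pairDist z + pairDist x ≤ ∑ i, ∑ j, |x i - z j| := by
  have h := sum_sum_abs_sub_add_le (by simp) x z
  linarith [two_mul_pairDist z, two_mul_pairDist x]

lemma pairDist_le (c : ℝ) : pairDist z ≤ n * ∑ k, |z k - c| := by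
  have h := sum_sum_abs_sub_self_le z c
  have : 0 ≤ ∑ k, |z k - c| := Finset.sum_nonneg fun _ _ => abs_nonneg _
  rw [Fintype.card_fin] at h
  linarith [two_mul_pairDist z]

lemma sum_sum_abs_sub_le_pairDist :
    ∑ i, ∑ j, |x i - z j| ≤ n * pairDist x + (n + 1) * ∑ k, |z k - x 0| := by
  have h := sum_sum_abs_sub_le x z (x 0)
  have hx := mul_le_mul_of_nonneg_left (sum_abs_sub_zero_le_pairDist x) (Nat.cast_nonneg (α := ℝ) n)
  simp only [Fintype.card_fin, Nat.cast_add, Nat.cast_one] at h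
  linarith

lemma two_mul_sum_abs_sub_le :
    2 * ∑ k, |z k - x 0| - (n + 1) * pairDist x ≤
      ∑ i, ∑ j, |x i - z j| - pairDist z - pairDist x := by
  have hxz := le_sum_sum_abs_sub x z (x 0)
  have hz := sum_sum_abs_sub_self_le z (x 0)
  have hx := mul_le_mul_of_nonneg_left (sum_abs_sub_zero_le_pairDist x) (Nat.cast_nonneg (α := ℝ) n)
  simp only [Fintype.card_fin, Nat.cast_add, Nat.cast_one] at hxz hz
  linarith [two_mul_pairDist z]

end PairDistances

section DecayExponent

-- A small multiple `θ` of the gap inequality `two_mul_sum_abs_sub_le` buys decay in `z` at the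
-- price of a small part of the decay in `x`.
theorem exists_decay_exponent_le (n : ℕ) {γ δ : ℝ} (hγ : 0 < γ) (hδ : 0 < δ) :
    ∃ ε > 0, ∃ κ > 0, ∀ (x : Fin (n + 1) → ℝ) (z : Fin n → ℝ),
      (2 * γ + ε) * pairDist z + (-γ + ε) * ∑ i, ∑ j, |x i - z j| + (-γ + ε) * pairDist z ≤
        (-γ + δ) * pairDist x - κ * ∑ k, |z k - x 0| := by
  obtain ⟨θ, hθ, hθ_one, hθδ⟩ : ∃ θ > 0, θ ≤ 1 ∧ γ * θ * (n + 1) ≤ δ / 2 := by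
    refine ⟨min 1 (δ / (2 * γ * (n + 1))), by positivity, min_le_left _ _, ?_⟩
    have h := min_le_right 1 (δ / (2 * γ * (n + 1)))
    rw [le_div_iff₀ (by positivity)] at h
    linarith
  obtain ⟨ε, hε, hεδ, hεθ⟩ : ∃ ε > 0, ε * n ≤ δ / 2 ∧ ε * (3 * n + 1) ≤ γ * θ := by
    refine ⟨min (δ / (2 * (n + 1))) (γ * θ / (3 * n + 1)), by positivity, ?_, ?_⟩
    · have h := min_le_left (δ / (2 * (n + 1))) (γ * θ / (3 * n + 1))
      have : 0 < min (δ / (2 * (n + 1))) (γ * θ / (3 * n + 1)) := by positivity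
      rw [le_div_iff₀ (by positivity)] at h
      linarith
    · exact (le_div_iff₀ (by positivity)).1 (min_le_right _ _)
  refine ⟨ε, hε, γ * θ, by positivity, fun x z => ?_⟩
  have interlacing := pairDist_add_pairDist_le x z
  have gap : θ * (2 * ∑ k, |z k - x 0| - (n + 1) * pairDist x) ≤
      ∑ i, ∑ j, |x i - z j| - pairDist z - pairDist x :=
    (mul_le_mul_of_nonneg_left (two_mul_sum_abs_sub_le x z) hθ.le).trans
      (mul_le_of_le_one_left (by linarith) hθ_one)
  have hz : 0 ≤ ∑ k, |z k - x 0| := Finset.sum_nonneg fun _ _ => abs_nonneg _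
  linarith [mul_le_mul_of_nonneg_left gap hγ.le,
    mul_le_mul_of_nonneg_left (pairDist_le z (x 0)) hε.le,
    mul_le_mul_of_nonneg_left (sum_sum_abs_sub_le_pairDist x z) hε.le,
    mul_le_mul_of_nonneg_right hθδ (pairDist_nonneg x),
    mul_le_mul_of_nonneg_right hεδ (pairDist_nonneg x), mul_le_mul_of_nonneg_right hεθ hz]

end DecayExponent

section ExponentialIntegrals

lemma norm_finsetProd_le_exp_sum {ι : Type*} {s : Finset ι} {f : ι → ℂ} {C : ℝ} {g : ι → ℝ}
    (h : ∀ i ∈ s, ‖f i‖ ≤ C * Real.exp (g i)) :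
    ‖∏ i ∈ s, f i‖ ≤ C ^ s.card * Real.exp (∑ i ∈ s, g i) := by
  rw [norm_prod, Real.exp_sum, ← Finset.prod_const, ← Finset.prod_mul_distrib]
  exact Finset.prod_le_prod (fun i _ => norm_nonneg _) h

lemma integrable_exp_neg_mul_abs {κ : ℝ} (hκ : 0 < κ) :
    Integrable fun u : ℝ => Real.exp (-κ * |u|) := by
  rw [← integrableOn_univ, ← Iic_union_Ioi (a := (0 : ℝ)), integrableOn_union]
  constructor
  · refine (integrableOn_exp_mul_Iic hκ 0).congr_fun (fun u hu => ?_) measurableSet_Iic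
    simp only [abs_of_nonpos (mem_Iic.1 hu), neg_mul_neg]
  · refine (integrableOn_exp_mul_Ioi (neg_neg_of_pos hκ) 0).congr_fun (fun u hu => ?_)
      measurableSet_Ioi
    simp only [abs_of_pos (mem_Ioi.1 hu)]

variable {ι : Type*} [Fintype ι]

lemma integrable_exp_neg_mul_sum_abs_sub {κ : ℝ} (hκ : 0 < κ) (t : ℝ) :
    Integrable fun z : ι → ℝ => Real.exp (-κ * ∑ k, |z k - t|) := by
  have h := Integrable.fintype_prod (ι := ι) (f := fun _ (u : ℝ) => Real.exp (-κ * |u|))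
    fun _ => integrable_exp_neg_mul_abs hκ
  simp only [← Real.exp_sum, ← Finset.mul_sum] at h
  exact h.comp_sub_right fun _ => t

lemma integral_exp_neg_mul_sum_abs_sub (κ t : ℝ) :
    ∫ z : ι → ℝ, Real.exp (-κ * ∑ k, |z k - t|) = ∫ z : ι → ℝ, Real.exp (-κ * ∑ k, |z k|) :=
  integral_sub_right_eq_self (μ := volume)
    (fun z : ι → ℝ => Real.exp (-κ * ∑ k, |z k|)) fun _ => t

end ExponentialIntegrals

section EigenLift

lemma differentiableAt_finsetProd {𝕜 E ι : Type*} [NontriviallyNormedField 𝕜]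
    [NormedAddCommGroup E] [NormedSpace 𝕜 E] {s : Finset ι} {f : ι → E → 𝕜} {x : E}
    (hf : ∀ i ∈ s, DifferentiableAt 𝕜 (f i) x) :
    DifferentiableAt 𝕜 (fun x => ∏ i ∈ s, f i x) x := by
  classical
  exact (HasFDerivAt.finsetProd fun i hi => (hf i hi).hasFDerivAt).differentiableAt

variable {ap am : ℝ} {n : ℕ} {J : ℂ → (Fin n → ℝ) → ℂ}

/-- The integrand of the recursion, with an arbitrary function `J` in place of `J_{N-1}` and
complex arguments `x`. -/
noncomputable def kernelIntegrand (ap am : ℝ) (J : ℂ → (Fin n → ℝ) → ℂ) (b : ℂ)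
    (x : Fin (n + 1) → ℂ) (z : Fin n → ℝ) : ℂ :=
  (∏ q : Fin n × Fin n with q.1 < q.2, wfun ap am b (z q.1 - z q.2)) *
    (∏ j : Fin (n + 1), ∏ k : Fin n, rker ap am b (x j - (z k : ℂ))) * J b z

/-- The recursion step, as an operator producing a function of `n + 1` complex variables from a
function `J` of `n` real ones; `η` is the last spectral variable. -/
noncomputable def eigenLift (ap am : ℝ) (η : ℂ) (J : ℂ → (Fin n → ℝ) → ℂ)
    (p : ℂ × (Fin (n + 1) → ℂ)) : ℂ :=
  (Complex.exp (I * (alphaPar ap am : ℂ) * η * ∑ j, p.2 j) / (Nat.factorial n : ℂ)) *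
    ∫ z : Fin n → ℝ, kernelIntegrand ap am J p.1 p.2 z

/-- The property propagated by the recursion: regularity in the coupling and in the variables,
and exponential decay, locally uniformly in the coupling `b`, at any rate below
`(α / 2) * Re b` with respect to `pairDist`. -/
structure IsDecayingFamily (ap am : ℝ) (J : ℂ → (Fin n → ℝ) → ℂ) : Prop where
  continuous {b : ℂ} (hb : b.re ∈ Ioo 0 (ap + am)) : Continuous (J b)
  differentiableAt {b : ℂ} (hb : b.re ∈ Ioo 0 (ap + am)) (x : Fin n → ℝ) :
    DifferentiableAt ℂ (fun b => J b x) b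
  decay {b₀ : ℂ} (hb₀ : b₀.re ∈ Ioo 0 (ap + am)) {ε : ℝ} (hε : 0 < ε) :
    ∃ C > 0, ∀ᶠ b in 𝓝 b₀, ∀ x,
      ‖J b x‖ ≤ C * Real.exp ((-(alphaPar ap am / 2 * b₀.re) + ε) * pairDist x)

/-- The part of `DN` near the real points on which the recursion integral converges without
moving the contour. -/
def centeredDomain (ap am : ℝ) (n : ℕ) : Set (ℂ × (Fin n → ℂ)) :=
  {p | p.1.re ∈ Ioo 0 (ap + am) ∧ ∀ j, 2 * |(p.2 j).im| + p.1.re < ap + am}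

lemma isOpen_centeredDomain : IsOpen (centeredDomain ap am n) := by
  simp only [centeredDomain, mem_Ioo, ofPred_and, ofPred_forall]
  refine ((isOpen_lt (by fun_prop) (by fun_prop)).inter
    (isOpen_lt (by fun_prop) (by fun_prop))).inter (isOpen_iInter_of_finite fun j => ?_)
  exact isOpen_lt (by fun_prop) (by fun_prop)

lemma ofReal_mem_centeredDomain {b : ℂ} (hb : b.re ∈ Ioo 0 (ap + am)) (x : Fin n → ℝ) :
    (b, fun j => (x j : ℂ)) ∈ centeredDomain ap am n :=
  ⟨hb, fun j => by simpa using hb.2⟩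

theorem IsDecayingFamily.exists_eventually_norm_kernelIntegrand_le (hap : 0 < ap) (ham : 0 < am)
    (hJ : IsDecayingFamily ap am J) {b₀ : ℂ} (hb₀ : b₀.re ∈ Ioo 0 (ap + am)) {s δ : ℝ}
    (hs : 2 * s + b₀.re < ap + am) (hδ : 0 < δ) :
    ∃ κ > 0, ∃ C > 0, ∀ᶠ b in 𝓝 b₀, ∀ x : Fin (n + 1) → ℂ, (∀ j, |(x j).im| ≤ s) → ∀ z,
      ‖kernelIntegrand ap am J b x z‖ ≤ C * Real.exp
        ((-(alphaPar ap am / 2 * b₀.re) + δ) * pairDist (fun j => (x j).re) -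
          κ * ∑ k, |z k - (x 0).re|) := by
  obtain ⟨ε, hε, κ, hκ, exponent_le⟩ := exists_decay_exponent_le n
    (mul_pos (half_pos (alphaPar_pos hap ham)) hb₀.1) hδ
  obtain ⟨Cw, hCw, weight_le⟩ := exists_eventually_norm_wfun_le hap ham hb₀ hε
  obtain ⟨Cr, hCr, kernel_le⟩ := exists_eventually_norm_rker_le hap ham
    (by rwa [abs_of_pos hb₀.1]) hε
  obtain ⟨CJ, hCJ, J_le⟩ := hJ.decay hb₀ hε
  refine ⟨κ, hκ, Cw ^ ({q : Fin n × Fin n | q.1 < q.2} : Finset _).card *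
    Cr ^ (Finset.univ : Finset (Fin (n + 1) × Fin n)).card * CJ, by positivity, ?_⟩
  filter_upwards [weight_le, kernel_le, J_le] with b hw hr hJb x hx z
  have weights_le := norm_finsetProd_le_exp_sum (s := {q : Fin n × Fin n | q.1 < q.2})
    fun q _ => hw (z q.1 - z q.2)
  have kernels_le := norm_finsetProd_le_exp_sum (s := (Finset.univ : Finset (Fin (n + 1) × Fin n)))
    fun q _ => hr (x q.1 - (z q.2 : ℂ)) (by simpa using hx q.1)
  rw [← Finset.mul_sum, ← pairDist] at weights_le
  rw [Fintype.prod_prod_type, ← Finset.mul_sum, Fintype.sum_prod_type] at kernels_le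
  simp only [sub_re, ofReal_re] at kernels_le
  rw [kernelIntegrand, norm_mul, norm_mul]
  refine (mul_le_mul (mul_le_mul weights_le kernels_le (norm_nonneg _) (by positivity)) (hJb z)
    (norm_nonneg _) (by positivity)).trans ?_
  rw [mul_mul_mul_comm (Cw ^ _), ← Real.exp_add, mul_mul_mul_comm, ← Real.exp_add]
  gcongr
  exact (le_of_eq (by ring)).trans (exponent_le (fun j => (x j).re) z)

lemma exists_abs_im_lt_of_mem_centeredDomain {p : ℂ × (Fin n → ℂ)}
    (hp : p ∈ centeredDomain ap am n) :
    ∃ s, 2 * s + p.1.re < ap + am ∧ ∀ j, |(p.2 j).im| < s := by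
  have near : ∀ᶠ s in 𝓝[<] ((ap + am - p.1.re) / 2), ∀ j, |(p.2 j).im| < s :=
    eventually_all.2 fun j => mem_nhdsWithin_of_mem_nhds (lt_mem_nhds (by linarith [hp.2 j]))
  obtain ⟨s, him, hs⟩ := (near.and self_mem_nhdsWithin).exists
  exact ⟨s, by linarith [show s < _ from hs], him⟩

lemma IsDecayingFamily.exists_integrable_dominating (hap : 0 < ap) (ham : 0 < am)
    (hJ : IsDecayingFamily ap am J) {p₀ : ℂ × (Fin (n + 1) → ℂ)}
    (hp₀ : p₀ ∈ centeredDomain ap am (n + 1)) :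
    ∃ B : (Fin n → ℝ) → ℝ, Integrable B ∧
      ∀ᶠ p in 𝓝 p₀, ∀ z, ‖kernelIntegrand ap am J p.1 p.2 z‖ ≤ B z := by
  obtain ⟨s, hs, him⟩ := exists_abs_im_lt_of_mem_centeredDomain hp₀
  obtain ⟨κ, hκ, C, hC, hle⟩ := hJ.exists_eventually_norm_kernelIntegrand_le hap ham hp₀.1 hs
    (mul_pos (half_pos (alphaPar_pos hap ham)) hp₀.1.1)
  refine ⟨fun z => C * Real.exp (κ * n) * Real.exp (-κ * ∑ k, |z k - (p₀.2 0).re|),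
    (integrable_exp_neg_mul_sum_abs_sub hκ _).const_mul _, ?_⟩
  have im_near : ∀ᶠ p in 𝓝 p₀, ∀ j, |(p.2 j).im| < s := eventually_all.2 fun j =>
    (show ContinuousAt (fun p : ℂ × (Fin (n + 1) → ℂ) => |(p.2 j).im|) p₀ by
      fun_prop).eventually_lt_const (him j)
  have re_near : ∀ᶠ p in 𝓝 p₀, |(p.2 0).re - (p₀.2 0).re| < 1 :=
    (show ContinuousAt (fun p : ℂ × (Fin (n + 1) → ℂ) => |(p.2 0).re - (p₀.2 0).re|) p₀ by
      fun_prop).eventually_lt_const (by simp)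
  filter_upwards [continuousAt_fst.eventually hle, im_near, re_near] with p hp hpim hpre z
  refine (hp p.2 (fun j => (hpim j).le) z).trans ?_
  have shift : ∑ k, |z k - (p₀.2 0).re| ≤ ∑ k, |z k - (p.2 0).re| + n := by
    refine (Finset.sum_le_sum (g := fun k => |z k - (p.2 0).re| + 1) fun k _ =>
      (abs_sub_le _ (p.2 0).re _).trans (by gcongr)).trans_eq ?_
    simp [Finset.sum_add_distrib]
  rw [neg_add_cancel, zero_mul, zero_sub, mul_assoc, ← Real.exp_add]
  gcongr
  linarith [mul_le_mul_of_nonneg_left shift hκ.le]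

lemma IsDecayingFamily.differentiableAt_kernelIntegrand (hap : 0 < ap) (ham : 0 < am)
    (hJ : IsDecayingFamily ap am J) {p : ℂ × (Fin (n + 1) → ℂ)}
    (hp : p ∈ centeredDomain ap am (n + 1)) (z : Fin n → ℝ) :
    DifferentiableAt ℂ (fun p : ℂ × (Fin (n + 1) → ℂ) => kernelIntegrand ap am J p.1 p.2 z) p := by
  unfold kernelIntegrand
  refine DifferentiableAt.fun_mul (DifferentiableAt.fun_mul ?_ ?_) ?_
  · refine differentiableAt_finsetProd fun q _ => ?_
    exact (differentiableAt_wfun hap ham hp.1 _).comp p differentiableAt_fst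
  · refine differentiableAt_finsetProd fun j _ => differentiableAt_finsetProd fun k _ => ?_
    have hq : 2 * |(p.2 j - z k).im| + |p.1.re| < ap + am := by
      simpa [abs_of_pos hp.1.1] using hp.2 j
    exact (differentiableAt_rker hap ham (q := (p.1, p.2 j - z k)) hq).comp p
      (f := fun p : ℂ × (Fin (n + 1) → ℂ) => (p.1, p.2 j - z k)) (by fun_prop)
  · exact (hJ.differentiableAt hp.1 z).comp p differentiableAt_fst

lemma IsDecayingFamily.continuous_kernelIntegrand (hap : 0 < ap) (ham : 0 < am)
    (hJ : IsDecayingFamily ap am J) {p : ℂ × (Fin (n + 1) → ℂ)}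
    (hp : p ∈ centeredDomain ap am (n + 1)) : Continuous (kernelIntegrand ap am J p.1 p.2) := by
  unfold kernelIntegrand
  refine Continuous.mul (Continuous.mul ?_ ?_) (hJ.continuous hp.1)
  · refine continuous_finsetProd _ fun q _ => ?_
    exact (continuous_wfun hap ham hp.1).comp
      (f := fun z : Fin n → ℝ => z q.1 - z q.2) (by fun_prop)
  · refine continuous_finsetProd _ fun j _ => continuous_finsetProd _ fun k _ => ?_
    exact (continuous_rker_sub_ofReal hap ham (by simpa [abs_of_pos hp.1.1] using hp.2 j)).comp
      (continuous_apply k)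

theorem IsDecayingFamily.integrable_kernelIntegrand (hap : 0 < ap) (ham : 0 < am)
    (hJ : IsDecayingFamily ap am J) {p : ℂ × (Fin (n + 1) → ℂ)}
    (hp : p ∈ centeredDomain ap am (n + 1)) : Integrable (kernelIntegrand ap am J p.1 p.2) := by
  obtain ⟨B, hB, hle⟩ := hJ.exists_integrable_dominating hap ham hp
  exact hB.mono' (hJ.continuous_kernelIntegrand hap ham hp).aestronglyMeasurable
    (Eventually.of_forall hle.self_of_nhds)

theorem IsDecayingFamily.differentiableOn_eigenLift (hap : 0 < ap) (ham : 0 < am)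
    (hJ : IsDecayingFamily ap am J) (η : ℂ) :
    DifferentiableOn ℂ (eigenLift ap am η J) (centeredDomain ap am (n + 1)) := by
  intro p₀ hp₀
  obtain ⟨B, hB, hle⟩ := hJ.exists_integrable_dominating hap ham hp₀
  have integral_diff : DifferentiableAt ℂ
      (fun p : ℂ × (Fin (n + 1) → ℂ) => ∫ z, kernelIntegrand ap am J p.1 p.2 z) p₀ :=
    differentiableAt_integral_of_norm_le
      (inter_mem (isOpen_centeredDomain.mem_nhds hp₀) hle) hB
      (fun p hp => (hJ.continuous_kernelIntegrand hap ham hp.1).aestronglyMeasurable)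
      (Eventually.of_forall fun z p hp =>
        (hJ.differentiableAt_kernelIntegrand hap ham hp.1 z).differentiableWithinAt)
      (Eventually.of_forall fun z p hp => hp.2 z)
  unfold eigenLift
  simp only [div_eq_mul_inv]
  exact (DifferentiableAt.fun_mul (by fun_prop) integral_diff).differentiableWithinAt

lemma norm_eigenLift_ofReal_le (η : ℝ) (J : ℂ → (Fin n → ℝ) → ℂ) (b : ℂ) (x : Fin (n + 1) → ℝ) :
    ‖eigenLift ap am η J (b, fun j => (x j : ℂ))‖ ≤
      ‖∫ z, kernelIntegrand ap am J b (fun j => (x j : ℂ)) z‖ := by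
  have phase : I * (alphaPar ap am : ℂ) * (η : ℂ) * ∑ j, (x j : ℂ) =
      ((alphaPar ap am * η * ∑ j, x j : ℝ) : ℂ) * I := by
    push_cast
    ring
  rw [eigenLift, norm_mul, norm_div, phase, norm_exp_ofReal_mul_I, Complex.norm_natCast]
  refine mul_le_of_le_one_left (norm_nonneg _) (div_le_one_of_le₀ ?_ (Nat.cast_nonneg _))
  exact_mod_cast Nat.one_le_iff_ne_zero.2 n.factorial_ne_zero

lemma IsDecayingFamily.decay_eigenLift (hap : 0 < ap) (ham : 0 < am)
    (hJ : IsDecayingFamily ap am J) (η : ℝ) {b₀ : ℂ} (hb₀ : b₀.re ∈ Ioo 0 (ap + am)) {ε : ℝ}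
    (hε : 0 < ε) :
    ∃ C > 0, ∀ᶠ b in 𝓝 b₀, ∀ x : Fin (n + 1) → ℝ,
      ‖eigenLift ap am η J (b, fun j => (x j : ℂ))‖ ≤
        C * Real.exp ((-(alphaPar ap am / 2 * b₀.re) + ε) * pairDist x) := by
  obtain ⟨κ, hκ, C, hC, hle⟩ := hJ.exists_eventually_norm_kernelIntegrand_le hap ham hb₀
    (s := 0) (by linarith [hb₀.2]) hε
  have integrable (t : ℝ) := integrable_exp_neg_mul_sum_abs_sub (ι := Fin n) hκ t
  have integral_pos : 0 < ∫ z : Fin n → ℝ, Real.exp (-κ * ∑ k, |z k|) :=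
    integral_exp_pos (by simpa using integrable 0)
  refine ⟨C * ∫ z : Fin n → ℝ, Real.exp (-κ * ∑ k, |z k|), mul_pos hC integral_pos, ?_⟩
  filter_upwards [hle] with b hb x
  refine (norm_eigenLift_ofReal_le η J b x).trans ?_
  rw [← integral_exp_neg_mul_sum_abs_sub κ (x 0), mul_right_comm, ← integral_const_mul]
  refine norm_integral_le_of_norm_le ((integrable (x 0)).const_mul _)
    (Eventually.of_forall fun z => ?_)
  rw [mul_assoc, ← Real.exp_add, neg_mul κ, ← sub_eq_add_neg]
  simpa using hb (fun j => (x j : ℂ)) (by simp) z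

theorem IsDecayingFamily.eigenLift_ofReal (hap : 0 < ap) (ham : 0 < am)
    (hJ : IsDecayingFamily ap am J) (η : ℝ) :
    IsDecayingFamily ap am fun b (x : Fin (n + 1) → ℝ) =>
      eigenLift ap am η J (b, fun j => (x j : ℂ)) where
  continuous hb := (hJ.differentiableOn_eigenLift hap ham η).continuousOn.comp_continuous
    (by fun_prop) (ofReal_mem_centeredDomain hb)
  differentiableAt {b} hb x :=
    ((hJ.differentiableOn_eigenLift hap ham η).differentiableAt
      (isOpen_centeredDomain.mem_nhds (ofReal_mem_centeredDomain hb x))).comp b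
      (f := fun b : ℂ => (b, fun j => (x j : ℂ))) (by fun_prop)
  decay hb₀ _ hε := hJ.decay_eigenLift hap ham η hb₀ hε

lemma kernelIntegrand_add_const {b σ : ℂ} {t : ℝ}
    (hJ : ∀ z, J b (fun k => z k + t) = Complex.exp (σ * t) * J b z)
    (x : Fin (n + 1) → ℂ) (z : Fin n → ℝ) :
    kernelIntegrand ap am J b (fun j => x j + t) (fun k => z k + t) =
      Complex.exp (σ * t) * kernelIntegrand ap am J b x z := by
  simp only [kernelIntegrand, hJ, add_sub_add_right_eq_sub, ofReal_add]
  ring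

theorem eigenLift_add_const {b σ : ℂ} {t : ℝ}
    (hJ : ∀ z, J b (fun k => z k + t) = Complex.exp (σ * t) * J b z)
    (η : ℂ) (x : Fin (n + 1) → ℂ) :
    eigenLift ap am η J (b, fun j => x j + t) =
      Complex.exp ((I * alphaPar ap am * (n + 1) * η + σ) * t) * eigenLift ap am η J (b, x) := by
  have integral_eq : ∫ z, kernelIntegrand ap am J b (fun j => x j + t) z =
      Complex.exp (σ * t) * ∫ z, kernelIntegrand ap am J b x z := by
    rw [← integral_const_mul,
      ← integral_add_right_eq_self (μ := volume) _ (fun _ : Fin n => t)]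
    exact integral_congr_ae (Eventually.of_forall (kernelIntegrand_add_const hJ x))
  have phase : I * alphaPar ap am * η * ∑ j, (x j + (t : ℂ)) =
      I * alphaPar ap am * (n + 1) * η * t + I * alphaPar ap am * η * ∑ j, x j := by
    simp only [Finset.sum_add_distrib, Finset.sum_const, Finset.card_univ, Fintype.card_fin,
      nsmul_eq_mul]
    push_cast
    ring
  simp only [eigenLift, integral_eq, phase, add_mul, Complex.exp_add]
  ring

end EigenLift

section Eigenfunctions

variable {ap am : ℝ}

/-- The function `J_n(b; z, (y₁ - y_{n+1}, …, y_n - y_{n+1}))` fed into the recursion step that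
produces `J_{n+1}(b; ·, y)`. -/
noncomputable def reducedEigenfunction (ap am : ℝ) {n : ℕ} (y : Fin (n + 1) → ℝ) (b : ℂ)
    (z : Fin n → ℝ) : ℂ :=
  Jrec ap am b n z fun j => y j.castSucc - y (Fin.last n)

lemma Jrec_add_two (b : ℂ) {M : ℕ} (x y : Fin (M + 2) → ℝ) :
    Jrec ap am b (M + 2) x y = eigenLift ap am (y (Fin.last (M + 1)))
      (reducedEigenfunction ap am y) (b, fun j => (x j : ℂ)) := by
  rw [Jrec]
  rfl

theorem isDecayingFamily_Jrec (hap : 0 < ap) (ham : 0 < am) (M : ℕ) (y : Fin (M + 1) → ℝ) :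
    IsDecayingFamily ap am fun b x => Jrec ap am b (M + 1) x y := by
  induction M with
  | zero =>
    refine ⟨fun _ => ?_, fun _ _ => ?_, fun _ _ _ => ⟨1, one_pos, Eventually.of_forall ?_⟩⟩
    · simp only [Jrec]
      fun_prop
    · simp only [Jrec]
      fun_prop
    · intro b x
      have pairDist_eq_zero : pairDist x = 0 := Finset.sum_eq_zero fun q _ => by
        rw [Subsingleton.elim (α := Fin 1) q.1 q.2, sub_self, abs_zero]
      simp [Jrec, Complex.norm_exp, pairDist_eq_zero]
  | succ M ih =>
    simp only [Jrec_add_two]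
    exact IsDecayingFamily.eigenLift_ofReal hap ham (ih _) _

theorem isDecayingFamily_reducedEigenfunction (hap : 0 < ap) (ham : 0 < am) {M : ℕ}
    (y : Fin (M + 2) → ℝ) : IsDecayingFamily ap am (reducedEigenfunction ap am y) :=
  isDecayingFamily_Jrec hap ham M _

lemma sum_spectral_variables (c : ℂ) {n : ℕ} (y : Fin (n + 1) → ℝ) :
    c * (n + 1) * y (Fin.last n) + c * ∑ j : Fin n, ((y j.castSucc - y (Fin.last n) : ℝ) : ℂ) =
      c * ∑ j, (y j : ℂ) := by
  rw [Fin.sum_univ_castSucc fun j => (y j : ℂ)]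
  simp only [ofReal_sub, Finset.sum_sub_distrib, Finset.sum_const, Finset.card_univ,
    Fintype.card_fin, nsmul_eq_mul]
  ring

theorem Jrec_add_const (b : ℂ) (t : ℝ) {M : ℕ} (x y : Fin (M + 1) → ℝ) :
    Jrec ap am b (M + 1) (fun j => x j + t) y =
      Complex.exp (I * alphaPar ap am * (∑ j, (y j : ℂ)) * t) * Jrec ap am b (M + 1) x y := by
  induction M with
  | zero =>
    simp only [Jrec, ← Complex.exp_add]
    congr 1
    rw [Fin.sum_univ_one fun j => (y j : ℂ), ofReal_add]
    ring
  | succ M ih =>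
    rw [Jrec_add_two, Jrec_add_two, ← sum_spectral_variables,
      ← eigenLift_add_const (J := reducedEigenfunction ap am y) fun z => ih z _]
    simp only [ofReal_add]

theorem eigenLift_reducedEigenfunction_add_const (b : ℂ) (t : ℝ) {M : ℕ} (y : Fin (M + 2) → ℝ)
    (x : Fin (M + 2) → ℂ) :
    eigenLift ap am (y (Fin.last (M + 1))) (reducedEigenfunction ap am y) (b, fun j => x j + t) =
      Complex.exp (I * alphaPar ap am * (∑ j, (y j : ℂ)) * t) *
        eigenLift ap am (y (Fin.last (M + 1))) (reducedEigenfunction ap am y) (b, x) := by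
  rw [← sum_spectral_variables,
    ← eigenLift_add_const (J := reducedEigenfunction ap am y) fun z => Jrec_add_const b t z _]

end Eigenfunctions

section TranslationExtension

lemma eq_of_forall_add_ofReal_eq {T : Set ℂ} (hT : IsOpen T) (hTc : IsPreconnected T) {f : ℂ → ℂ}
    (hf : DifferentiableOn ℂ f T) (hinv : ∀ τ ∈ T, ∀ t : ℝ, f (τ + t) = f τ) {τ σ : ℂ}
    (hτ : τ ∈ T) (hσ : σ ∈ T) : f τ = f σ := by
  refine hT.is_const_of_deriv_eq_zero hTc hf (fun τ hτ => ?_) hτ hσ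
  have line : HasDerivAt (fun t : ℝ => τ + (t : ℂ)) 1 0 := by
    simpa using (ofRealCLM.hasDerivAt (x := (0 : ℝ))).const_add τ
  have along_line : HasDerivAt (fun t : ℝ => f (τ + t)) (deriv f τ * 1) 0 :=
    (hf.differentiableAt (hT.mem_nhds hτ)).hasDerivAt.comp_of_eq (0 : ℝ) line (by simp)
  simp only [hinv τ hτ, mul_one] at along_line
  exact along_line.unique (hasDerivAt_const _ _)

-- The value `exp (-μ τ) * F (p + τ • v)` does not depend on the shift `τ` that moves `p` into `U`.
theorem exists_differentiableOn_extension_of_covariant {E : Type*} [NormedAddCommGroup E]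
    [NormedSpace ℂ E] {U : Set E} (hU : IsOpen U) {v : E} {μ : ℂ} {F : E → ℂ}
    (hF : DifferentiableOn ℂ F U)
    (hcov : ∀ p ∈ U, ∀ t : ℝ, F (p + (t : ℂ) • v) = Complex.exp (μ * t) * F p)
    (hconn : ∀ p, IsPreconnected {τ : ℂ | p + τ • v ∈ U}) :
    ∃ G : E → ℂ, DifferentiableOn ℂ G {p | ∃ τ : ℂ, p + τ • v ∈ U} ∧ EqOn G F U := by
  let shifted (p : E) (τ : ℂ) : ℂ := Complex.exp (-(μ * τ)) * F (p + τ • v)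
  have shifted_diff {q : E × ℂ} (hq : q.1 + q.2 • v ∈ U) :
      DifferentiableAt ℂ (fun q : E × ℂ => shifted q.1 q.2) q :=
    DifferentiableAt.fun_mul (by fun_prop) <|
      (hF.differentiableAt (hU.mem_nhds hq)).comp q
        (f := fun q : E × ℂ => q.1 + q.2 • v) (by fun_prop)
  have shifted_add_ofReal (p : E) (τ : ℂ) (hτ : p + τ • v ∈ U) (t : ℝ) :
      shifted p (τ + t) = shifted p τ := by
    simp only [shifted, add_smul, ← add_assoc, hcov _ hτ]
    rw [← mul_assoc, ← Complex.exp_add]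
    ring_nf
  have shifted_eq {p : E} {τ σ : ℂ} (hτ : p + τ • v ∈ U) (hσ : p + σ • v ∈ U) :
      shifted p τ = shifted p σ := by
    refine eq_of_forall_add_ofReal_eq (hU.preimage (f := fun τ : ℂ => p + τ • v) (by fun_prop))
      (hconn p) (fun τ hτ => ?_) (shifted_add_ofReal p) hτ hσ
    exact ((shifted_diff (q := (p, τ)) hτ).comp τ
      (f := fun τ : ℂ => (p, τ)) (by fun_prop)).differentiableWithinAt
  let shift (p : E) : ℂ := Classical.epsilon fun τ : ℂ => p + τ • v ∈ U
  have shift_mem {p : E} {τ : ℂ} (hτ : p + τ • v ∈ U) : p + shift p • v ∈ U :=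
    Classical.epsilon_spec (p := fun τ : ℂ => p + τ • v ∈ U) ⟨τ, hτ⟩
  refine ⟨fun p => shifted p (shift p), fun p ⟨τ, hτ⟩ => ?_, fun p hp => ?_⟩
  · have fixed_shift : DifferentiableAt ℂ (fun q => shifted q τ) p :=
      (shifted_diff (q := (p, τ)) hτ).comp p (f := fun q : E => (q, τ)) (by fun_prop)
    refine (fixed_shift.congr_of_eventuallyEq ?_).differentiableWithinAt
    filter_upwards [(hU.preimage (f := fun q : E => q + τ • v) (by fun_prop)).mem_nhds hτ] with q hq
    exact shifted_eq (shift_mem hq) hq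
  · have zero_shift : p + (0 : ℂ) • v ∈ U := by simpa using hp
    simpa [shifted] using shifted_eq (shift_mem zero_shift) zero_shift

end TranslationExtension

section Domain

variable {ap am : ℝ} {n : ℕ}

lemma convex_setOf_abs_add_mul_im_lt (r s c : ℝ) : Convex ℝ {τ : ℂ | |r + s * τ.im| < c} := by
  intro τ hτ σ hσ u v hu hv huv
  have h := convex_Ioo (-c) c (abs_lt.1 hτ) (abs_lt.1 hσ) hu hv huv
  have combination : r + s * (u • τ + v • σ).im =
      u • (r + s * τ.im) + v • (r + s * σ.im) := by
    simp only [add_im, smul_im, smul_eq_mul]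
    linear_combination (-r) * huv
  rw [mem_ofPred_eq, combination]
  exact abs_lt.2 h

lemma add_smul_mem_centeredDomain_iff {p : ℂ × (Fin n → ℂ)} {τ : ℂ} :
    p + τ • ((0, 1) : ℂ × (Fin n → ℂ)) ∈ centeredDomain ap am n ↔
      p.1.re ∈ Ioo 0 (ap + am) ∧ ∀ j, |(p.2 j).im + τ.im| < (ap + am - p.1.re) / 2 := by
  simp [centeredDomain, lt_div_iff₀', lt_sub_iff_add_lt]

lemma isPreconnected_setOf_add_smul_mem_centeredDomain (p : ℂ × (Fin n → ℂ)) :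
    IsPreconnected {τ : ℂ | p + τ • ((0, 1) : ℂ × (Fin n → ℂ)) ∈ centeredDomain ap am n} := by
  simp only [add_smul_mem_centeredDomain_iff, ofPred_and, ofPred_forall]
  have constant_condition : Convex ℝ {_τ : ℂ | p.1.re ∈ Ioo 0 (ap + am)} :=
    fun _ hp _ _ _ _ _ _ _ => hp
  exact (constant_condition.inter
    (convex_iInter fun j => by simpa using
      convex_setOf_abs_add_mul_im_lt (p.2 j).im 1 ((ap + am - p.1.re) / 2))).isPreconnected

-- The shift moves the midpoint of the range of the imaginary parts to `0`.
lemma exists_add_smul_mem_centeredDomain {p : ℂ × (Fin (n + 1) → ℂ)}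
    (hp : p ∈ DN ap am (n + 1)) :
    ∃ τ : ℂ, p + τ • ((0, 1) : ℂ × (Fin (n + 1) → ℂ)) ∈ centeredDomain ap am (n + 1) := by
  obtain ⟨i, hi⟩ := Finite.exists_max fun j => (p.2 j).im
  obtain ⟨k, hk⟩ := Finite.exists_min fun j => (p.2 j).im
  have spread := (abs_lt.1 (hp.2 i k)).2
  rw [sub_im] at spread
  refine ⟨((-(((p.2 i).im + (p.2 k).im) / 2) : ℝ) : ℂ) * I,
    add_smul_mem_centeredDomain_iff.2 ⟨hp.1, fun j => ?_⟩⟩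
  rw [im_ofReal_mul, I_im, mul_one]
  exact abs_lt.2 ⟨by linarith [hk j], by linarith [hi j]⟩

theorem exists_extension_to_DN {μ : ℂ} {F : ℂ × (Fin (n + 1) → ℂ) → ℂ}
    (hF : DifferentiableOn ℂ F (centeredDomain ap am (n + 1)))
    (hcov : ∀ b x, ∀ t : ℝ, F (b, fun j => x j + t) = Complex.exp (μ * t) * F (b, x)) :
    ∃ G, DifferentiableOn ℂ G (DN ap am (n + 1)) ∧ EqOn G F (centeredDomain ap am (n + 1)) := by
  have covariant (p : ℂ × (Fin (n + 1) → ℂ)) (t : ℝ) :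
      F (p + (t : ℂ) • ((0, 1) : ℂ × (Fin (n + 1) → ℂ))) = Complex.exp (μ * t) * F p := by
    rw [← hcov p.1 p.2 t]
    congr 1
    ext <;> simp
  obtain ⟨G, hG, hGF⟩ := exists_differentiableOn_extension_of_covariant isOpen_centeredDomain hF
    (fun p _ t => covariant p t) isPreconnected_setOf_add_smul_mem_centeredDomain
  exact ⟨G, hG.mono fun p hp => exists_add_smul_mem_centeredDomain hp, hGF⟩

lemma eqOn_of_forall_ofReal_eq {V : Set ℂ} (hV : IsOpen V) (hVc : IsPreconnected V)
    (h0 : (0 : ℂ) ∈ V) {f g : ℂ → ℂ} (hf : DifferentiableOn ℂ f V) (hg : DifferentiableOn ℂ g V)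
    (hfg : ∀ t : ℝ, (t : ℂ) ∈ V → f t = g t) : EqOn f g V := by
  refine (hf.analyticOnNhd hV).eqOn_of_preconnected_of_frequently_eq (hg.analyticOnNhd hV) hVc h0 ?_
  have ofReal_tendsto : Tendsto ((↑) : ℝ → ℂ) (𝓝[≠] 0) (𝓝[≠] 0) :=
    tendsto_nhdsWithin_iff.2 ⟨(continuous_ofReal.tendsto' 0 0 ofReal_zero).mono_left
      nhdsWithin_le_nhds, by filter_upwards [self_mem_nhdsWithin] with t ht using by simpa using ht⟩
  have ofReal_mem : ∀ᶠ t : ℝ in 𝓝[≠] 0, (t : ℂ) ∈ V :=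
    ofReal_tendsto.eventually (mem_nhdsWithin_of_mem_nhds (hV.mem_nhds h0))
  exact ofReal_tendsto.frequently (ofReal_mem.mono hfg).frequently

lemma isOpen_DN : IsOpen (DN ap am n) := by
  simp only [DN, ofPred_and, ofPred_forall]
  refine ((isOpen_lt (by fun_prop) (by fun_prop)).inter
    (isOpen_lt (by fun_prop) (by fun_prop))).inter
    (isOpen_iInter_of_finite fun j => isOpen_iInter_of_finite fun k => ?_)
  exact isOpen_lt (by fun_prop) (by fun_prop)

-- The complex line through `Re x` and `x` meets the real points in a real line.
theorem eqOn_DN_of_forall_ofReal_eq {F G : ℂ × (Fin n → ℂ) → ℂ}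
    (hF : DifferentiableOn ℂ F (DN ap am n)) (hG : DifferentiableOn ℂ G (DN ap am n))
    (hFG : ∀ b : ℂ, b.re ∈ Ioo 0 (ap + am) → ∀ x : Fin n → ℝ,
      F (b, fun j => (x j : ℂ)) = G (b, fun j => (x j : ℂ))) :
    EqOn F G (DN ap am n) := by
  intro p hp
  let line (τ : ℂ) : ℂ × (Fin n → ℂ) := (p.1, fun j => ((p.2 j).re : ℂ) + τ * ((p.2 j).im : ℂ))
  have line_diff : Differentiable ℂ line := by fun_prop
  have preimage_eq : line ⁻¹' DN ap am n = ⋂ j, ⋂ k,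
      {τ : ℂ | |0 + ((p.2 j).im - (p.2 k).im) * τ.im| < ap + am - p.1.re} := by
    ext τ
    simp [-abs_mul, line, DN, hp.1.1, hp.1.2, ← mul_sub, mul_comm]
  have line_I : line I = p := Prod.ext rfl <| funext fun j => by
    simp only [line]
    rw [mul_comm, re_add_im]
  have eq_on_reals (t : ℝ) : F (line t) = G (line t) := by
    simpa [line] using hFG p.1 hp.1 fun j => (p.2 j).re + t * (p.2 j).im
  have line_zero : line 0 ∈ DN ap am n := ⟨hp.1, fun j k => by simpa [line] using hp.1.2⟩
  have convex : Convex ℝ (line ⁻¹' DN ap am n) := preimage_eq ▸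
    convex_iInter fun j => convex_iInter fun k => convex_setOf_abs_add_mul_im_lt _ _ _
  have key := eqOn_of_forall_ofReal_eq (isOpen_DN.preimage line_diff.continuous)
    convex.isPreconnected line_zero (hF.comp line_diff.differentiableOn fun _ hτ => hτ)
    (hG.comp line_diff.differentiableOn fun _ hτ => hτ) fun t _ => eq_on_reals t
  simpa [line_I] using key (x := I) (by simpa [line_I] using hp)

end Domain

theorem exists_differentiableOn_DN_eq_Jrec {ap am : ℝ} (hap : 0 < ap) (ham : 0 < am) {M : ℕ}
    (y : Fin (M + 2) → ℝ) :
    ∃ F, DifferentiableOn ℂ F (DN ap am (M + 2)) ∧ ∀ b : ℂ, b.re ∈ Ioo 0 (ap + am) →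
      ∀ x : Fin (M + 2) → ℝ, F (b, fun j => (x j : ℂ)) = Jrec ap am b (M + 2) x y := by
  obtain ⟨F, hF, hext⟩ := exists_extension_to_DN
    ((isDecayingFamily_reducedEigenfunction hap ham y).differentiableOn_eigenLift hap ham _)
    fun b x t => eigenLift_reducedEigenfunction_add_const b t y x
  refine ⟨F, hF, fun b hb x => ?_⟩
  rw [hext (ofReal_mem_centeredDomain hb x), Jrec_add_two]

/-- Prop. 6.1: for `N ≥ 2` and fixed real `y`, all the integrals in the
recursive definition of `J_N(b;x,y)` converge absolutely for `b ∈ S_a`, and `J_N(b;·,y)` has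
a unique holomorphic extension to the domain `D_N`. -/
theorem statement15 (ap am : ℝ) (hap : 0 < ap) (ham : 0 < am)
    (N : ℕ) (hN : 2 ≤ N) (y : Fin N → ℝ) :
    (∀ b : ℂ, 0 < b.re → b.re < ap + am →
      ∀ M : ℕ, M + 2 ≤ N → ∀ x' y' : Fin (M + 2) → ℝ,
      Integrable (fun z : Fin (M + 1) → ℝ =>
        (∏ q ∈ Finset.univ.filter (fun q : Fin (M + 1) × Fin (M + 1) => q.1 < q.2),
          wfun ap am b (z q.1 - z q.2)) *
        (∏ j : Fin (M + 2), ∏ k : Fin (M + 1), rker ap am b ((x' j : ℂ) - (z k : ℂ))) *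
        Jrec ap am b (M + 1) z
          (fun j => y' (Fin.castSucc j) - y' (Fin.last (M + 1))))) ∧
    ∃ F : ℂ × (Fin N → ℂ) → ℂ,
      (DifferentiableOn ℂ F (DN ap am N) ∧
        ∀ b : ℂ, 0 < b.re → b.re < ap + am → ∀ x : Fin N → ℝ,
          F (b, fun i => (x i : ℂ)) = Jrec ap am b N x y) ∧
      ∀ F' : ℂ × (Fin N → ℂ) → ℂ,
        DifferentiableOn ℂ F' (DN ap am N) →
        (∀ b : ℂ, 0 < b.re → b.re < ap + am → ∀ x : Fin N → ℝ,
          F' (b, fun i => (x i : ℂ)) = Jrec ap am b N x y) →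
        Set.EqOn F' F (DN ap am N) := by
  constructor
  · intro b hb0 hb1 M _ x' y'
    have integrable := (isDecayingFamily_reducedEigenfunction hap ham y').integrable_kernelIntegrand
      hap ham (ofReal_mem_centeredDomain ⟨hb0, hb1⟩ x')
    exact integrable
  · obtain ⟨M, rfl⟩ := Nat.exists_eq_add_of_le' hN
    obtain ⟨F, hF, hreal⟩ := exists_differentiableOn_DN_eq_Jrec hap ham y
    refine ⟨F, ⟨hF, fun b hb0 hb1 => hreal b ⟨hb0, hb1⟩⟩, fun F' hF' hreal' => ?_⟩
    exact eqOn_DN_of_forall_ofReal_eq hF' hF fun b hb x =>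
      (hreal' b hb.1 hb.2 x).trans (hreal b hb x).symm
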